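/- Fix any iteration t ≤ T+1 and let ρ_max^{S_U} := max over k ∈ S_U, q ≠ s(X_k), r ∈ [m] of ρ_{k,q,r}^{(t)}. On the event E, under Condition (H), every learnable noise coefficient satisfies ρ_{i,j,r}^{(t)} ≤ σ_0/(σ_n√d) + (p_un N σ_n² √d / (100·(log T)^{2/3}))·(ρ_max^{S_U})² for all i ∈ S_L, j ≠ s(X_i), r ∈ [m]. Consequently, the noise-stability bound (NS) holds at iteration t: |⟨w_r^{(t)}, x_{i,j}⟩| ≤ 3σ_0σ_n√(d·log(16NmP/δ)) + (21 p_un N P (log T)^{1/3}/√d)·√(log(16N²P²/δ)) for all i ∈ S_L, j ≠ s(X_i), r ∈ [m]. -/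

import Mathlib

open Finset MeasureTheory ProbabilityTheory
open scoped ENNReal NNReal

noncomputable section

namespace AD

/-- Cubic ReLU activation. -/
def phi (z : ℝ) : ℝ := (max 0 z) ^ 3

/-- Negative sigmoid `ψ(z) = 1/(1+e^z)`. -/
def psi (z : ℝ) : ℝ := 1 / (1 + Real.exp z)

/-- Logistic loss `ℓ(z) = log(1+e^{-z})`. -/
def lloss (z : ℝ) : ℝ := Real.log (1 + Real.exp (-z))

/-- Logistic sigmoid `σ(z) = 1/(1+e^{-z})`. -/
def sigm (z : ℝ) : ℝ := 1 / (1 + Real.exp (-z))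

/-- Euclidean inner product on `Fin d → ℝ`. -/
def dot {d : ℕ} (a b : Fin d → ℝ) : ℝ := ∑ k, a k * b k

/-- Squared Euclidean norm. -/
def sqnorm {d : ℕ} (a : Fin d → ℝ) : ℝ := dot a a

/-- First standard basis vector `e₁` (the learnable feature `u`). -/
def e1 (d : ℕ) (hd : 0 < d) : Fin d → ℝ := fun k => if k = (⟨0, hd⟩ : Fin d) then 1 else 0

/-- Last standard basis vector `e_d` (the unlearnable feature `v`). -/
def eLast (d : ℕ) (_hd : 0 < d) : Fin d → ℝ := fun k => if (k : ℕ) = d - 1 then 1 else 0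

/-- The two-layer student network
`f_W(X) = ∑_r ∑_p [φ(⟨w_r,x_p⟩) − φ(−⟨w_r,x_p⟩)]`. -/
def netOut {m P d : ℕ} (w : Fin m → Fin d → ℝ) (X : Fin P → Fin d → ℝ) : ℝ :=
  ∑ r, ∑ p, (phi (dot (w r) (X p)) - phi (-(dot (w r) (X p))))

/-- The concentration event `E` of the paper, i.e. properties (P1)–(P8), stated for
training patches `x`, initialization `w0`, labels `y` and signal-patch indices `sig`. -/
def EventEOn (N m P d : ℕ) (hd : 0 < d) (sigman sigma0 delta : ℝ)
    (y : Fin N → ℝ) (sig : Fin N → Fin P)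
    (x : Fin N → Fin P → Fin d → ℝ) (w0 : Fin m → Fin d → ℝ) : Prop :=
  -- (P1) noise-patch norms
  (∀ i j, j ≠ sig i →
      sigman ^ 2 * d / 2 ≤ sqnorm (x i j) ∧ sqnorm (x i j) ≤ 3 * sigman ^ 2 * d / 2) ∧
  -- (P2) pairwise noise inner products
  (∀ i k j q, j ≠ sig i → q ≠ sig k → ((i, j) : Fin N × Fin P) ≠ (k, q) →
      |dot (x i j) (x k q)| ≤
        2 * sigman ^ 2 * Real.sqrt ((d : ℝ) * Real.log ((16 : ℝ) * N ^ 2 * P ^ 2 / delta))) ∧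
  -- (P3) sup-norm of noise patches
  (∀ i j, j ≠ sig i → ∀ kk : Fin d,
      |x i j kk| ≤ sigman * Real.sqrt (2 * Real.log ((16 : ℝ) * d * N * P / delta))) ∧
  -- (P4) initialization norms
  (∀ r, Real.sqrt (sqnorm (w0 r)) ≤ 2 * sigma0 * Real.sqrt d) ∧
  -- (P5) initialization signal correlation
  (∀ r, |dot (w0 r) (e1 d hd)| ≤ sigma0 * Real.sqrt (2 * Real.log ((16 : ℝ) * m / delta))) ∧
  -- (P6) initialization noise correlations
  (∀ r i j, j ≠ sig i →
      |dot (w0 r) (x i j)| ≤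
        2 * sigma0 * sigman * Real.sqrt ((d : ℝ) * Real.log ((16 : ℝ) * N * m * P / delta))) ∧
  -- (P7) maximal initial signal alignment
  (∃ r, sigma0 / 2 ≤ dot (w0 r) (e1 d hd)) ∧
  -- (P8) maximal initial noise alignment
  (∀ i j, j ≠ sig i → ∃ r, sigma0 * sigman * Real.sqrt d / 4 ≤ y i * dot (w0 r) (x i j))
structure Setting where
  N : ℕ
  m : ℕ
  P : ℕ
  d : ℕ
  T : ℕ
  hN : 0 < N
  hm : 0 < m
  hP : 0 < P
  hd : 0 < d
  alpha : ℝ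
  sigman : ℝ
  sigma0 : ℝ
  eta : ℝ
  eps : ℝ
  delta : ℝ
  halpha : 0 < alpha
  hsigman : 0 < sigman
  hsigma0 : 0 < sigma0
  heta : 0 < eta
  heps : 0 < eps
  hepsalpha : eps < alpha
  hdelta0 : 0 < delta
  hdelta1 : delta < 1
  /-- labels -/
  y : Fin N → ℝ
  hy : ∀ i, y i = 1 ∨ y i = -1
  /-- signal patch index -/
  sig : Fin N → Fin P
  /-- learnable samples -/
  SL : Finset (Fin N)
  /-- unlearnable samples -/
  SU : Finset (Fin N)
  hunion : SL ∪ SU = Finset.univ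
  hdisj : Disjoint SL SU
  /-- training patches -/
  x : Fin N → Fin P → Fin d → ℝ
  hsigL : ∀ i ∈ SL, x i (sig i) = (alpha * y i) • e1 d hd
  hsigU : ∀ i ∈ SU, x i (sig i) = (alpha * y i) • eLast d hd
  hnoiseU : ∀ i j, j ≠ sig i → dot (x i j) (e1 d hd) = 0
  hnoiseV : ∀ i j, j ≠ sig i → dot (x i j) (eLast d hd) = 0
  /-- weight trajectory -/
  w : ℕ → Fin m → Fin d → ℝ
  hwperp : ∀ t r, dot (w t r) (eLast d hd) = 0
  /-- adversarial training examples at each iteration -/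
  xadv : ℕ → Fin N → Fin P → Fin d → ℝ
  hadvnoise : ∀ t i j, j ≠ sig i → xadv t i j = x i j
  hadvspan : ∀ t i, ∃ c : ℝ, xadv t i (sig i) - x i (sig i) = c • x i (sig i)
  hadvlinf : ∀ t i p k, |xadv t i p k - x i p k| ≤ eps
  hadvlearn : ∀ t : ℕ, ∀ i ∈ SL,
    alpha - eps ≤ y i * dot (xadv t i (sig i)) (e1 d hd) ∧
      y i * dot (xadv t i (sig i)) (e1 d hd) ≤ alpha

namespace Setting

variable (S : Setting)

/-- Adversarial margin `y_i f_{W^{(t)}}(X̃_i^{(t)})`. -/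
def marg (t : ℕ) (i : Fin S.N) : ℝ := S.y i * netOut (S.w t) (S.xadv t i)

/-- Signal coordinate `w_{r,1}^{(t)}`. -/
def wsig (t : ℕ) (r : Fin S.m) : ℝ := S.w t r ⟨0, S.hd⟩

/-- Unlearnable fraction `p_un = |S_U|/N`. -/
def pun : ℝ := (S.SU.card : ℝ) / S.N

/-- The adversarial-training gradient-descent dynamics. -/
def ATDyn : Prop :=
  ∀ t r, S.w (t + 1) r = S.w t r +
    (3 * S.eta / S.N) •
      ∑ i : Fin S.N, (psi (S.marg t i) * S.y i) •
        ∑ p : Fin S.P, (dot (S.w t r) (S.xadv t i p)) ^ 2 • S.xadv t i p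

/-- The signed gradient weight of sample `i` at iteration `t` under adversarial
distillation from teacher logits `fT`. -/
def gAD (fT : Fin S.N → ℝ) (t : ℕ) (i : Fin S.N) : ℝ :=
  sigm (S.y i * fT i) * psi (S.marg t i) - sigm (-(S.y i * fT i)) * psi (-(S.marg t i))

/-- The adversarial-distillation gradient-descent dynamics. -/
def ADDyn (fT : Fin S.N → ℝ) : Prop :=
  ∀ t r, S.w (t + 1) r = S.w t r +
    (3 * S.eta / S.N) •
      ∑ i : Fin S.N, (S.gAD fT t i * S.y i) •
        ∑ p : Fin S.P, (dot (S.w t r) (S.xadv t i p)) ^ 2 • S.xadv t i p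

/-- Noise coefficients `ρ_{i,j,r}^{(t)}` (adversarial training). -/
def rho (i : Fin S.N) (j : Fin S.P) (r : Fin S.m) : ℕ → ℝ
  | 0 => 0
  | t + 1 => rho i j r t + (3 * S.eta / S.N) * psi (S.marg t i) * (dot (S.w t r) (S.x i j)) ^ 2

/-- Noise coefficients under adversarial distillation. -/
def rhoAD (fT : Fin S.N → ℝ) (i : Fin S.N) (j : Fin S.P) (r : Fin S.m) : ℕ → ℝ
  | 0 => 0
  | t + 1 => rhoAD fT i j r t + (3 * S.eta / S.N) * S.gAD fT t i * (dot (S.w t r) (S.x i j)) ^ 2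

/-- The event `E` for a setting. -/
def EventE : Prop :=
  EventEOn S.N S.m S.P S.d S.hd S.sigman S.sigma0 S.delta S.y S.sig S.x (S.w 0)

/-- Condition (H): the parameter requirements of Condition 4.1 of the paper
(without the unlearnable-fraction regime item, which is imposed separately). -/
def CondH (C : ℝ) : Prop :=
  1 ≤ C ∧
  -- training horizon
  C * S.N / (S.eta * S.sigma0 * S.sigman ^ 3 * ((S.d : ℝ) * Real.sqrt S.d)) ≤ (S.T : ℝ) ∧
  -- dimension
  C * S.m ^ 2 * S.P ^ 2 * S.N ^ 2 *
      (Real.log ((S.T : ℝ) * S.N * S.m * S.P / S.delta)) ^ 4 ≤ (S.d : ℝ) ∧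
  -- signal strength
  C * S.sigman * Real.sqrt S.d * Real.log ((S.T : ℝ) * S.N * S.m * S.P / S.delta) /
      (((S.N : ℝ) * (1 - S.pun)) ^ ((1 : ℝ) / 3)) ≤ S.alpha ∧
  -- initialization scale
  S.sigma0 ≤
    C⁻¹ *
        min (min (1 / ((S.m : ℝ) ^ ((2 : ℝ) / 3) * (S.P : ℝ) ^ ((2 : ℝ) / 3) *
            S.sigman * Real.sqrt S.d))
          (1 / (S.alpha * (S.m : ℝ) ^ ((2 : ℝ) / 3))))
          (1 / (S.sigman * S.m ^ 2 * Real.sqrt S.P * S.d)) /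
      Real.log ((S.T : ℝ) * S.d * S.N * S.m * S.P / S.delta) ∧
  -- learning rate
  S.eta ≤
    C⁻¹ * min (min (1 / (S.alpha ^ 3 * S.sigma0)) (1 / (S.sigman ^ 2 * S.d))) (1 / S.alpha ^ 2) /
      Real.log ((S.T : ℝ) * S.N * S.m * S.P / S.delta) ∧
  -- adversarial budget
  C * S.sigman * S.m * Real.sqrt S.P * Real.log ((S.T : ℝ) * S.d * S.N * S.P / S.delta) ≤ S.eps ∧
  S.eps < C⁻¹ * min S.alpha (1 / (S.m * S.sigma0 * S.d)) ∧
  -- width and number of patches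
  C * Real.log ((S.N : ℝ) * S.P / S.delta) ≤ (S.m : ℝ) ∧
  (S.m : ℝ) ≤ C * Real.log S.d ^ C ∧
  2 ≤ S.P ∧ (S.P : ℝ) ≤ C

/-- The sparse-unlearnable regime of Condition 4.1. -/
def SparseRegime (C : ℝ) : Prop :=
  C / S.N ≤ S.pun ∧ S.pun ≤ C⁻¹ * Real.log S.d / S.N ∧
  C * S.m * S.P * Real.log ((S.T : ℝ) * S.d * S.N * S.m * S.P / S.delta) ≤ (S.N : ℝ)

/-- The noise-stability bound (NS) on learnable samples at iteration `t`. -/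
def NS (t : ℕ) : Prop :=
  ∀ r : Fin S.m, ∀ i ∈ S.SL, ∀ j, j ≠ S.sig i →
    |dot (S.w t r) (S.x i j)| ≤
      3 * S.sigma0 * S.sigman *
          Real.sqrt ((S.d : ℝ) * Real.log ((16 : ℝ) * S.N * S.m * S.P / S.delta)) +
        21 * S.pun * S.N * S.P * Real.log S.T ^ ((1 : ℝ) / 3) / Real.sqrt S.d *
          Real.sqrt (Real.log ((16 : ℝ) * S.N ^ 2 * S.P ^ 2 / S.delta))

/-- The signal-learning hitting time `T₀`. -/
def T0 (C0 : ℝ) : ℕ :=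
  sInf {t : ℕ | ∃ r, C0 / (S.alpha * (S.m : ℝ) ^ ((1 : ℝ) / 3)) < S.wsig t r}

/-- Maximum of the noise coefficients over unlearnable noise patches. -/
def rhoMaxSU (t : ℕ) : ℝ :=
  sSup {z : ℝ | ∃ r : Fin S.m, ∃ k ∈ S.SU, ∃ q, q ≠ S.sig k ∧ z = S.rho k q r t}

/-- Shifted noise coefficients `ρ̂_{i,j,r}^{(t)}`. -/
def rhoHat (i : Fin S.N) (j : Fin S.P) (r : Fin S.m) (t : ℕ) : ℝ :=
  S.rho i j r t + S.y i * dot (S.w 0 r) (S.x i j) / sqnorm (S.x i j)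

/-- Maximum shifted noise coefficient over unlearnable noise patches. -/
def rhoHatMax (t : ℕ) : ℝ :=
  sSup {z : ℝ | ∃ r : Fin S.m, ∃ k ∈ S.SU, ∃ q, q ≠ S.sig k ∧ z = S.rhoHat k q r t}

/-- The noise-memorization hitting time `T₁`. -/
def T1 (C1 : ℝ) : ℕ :=
  sInf {t : ℕ | C1 / (((S.m : ℝ) * S.P) ^ ((1 : ℝ) / 3) * S.sigman ^ 2 * S.d) < S.rhoHatMax t}

/-- The Good-Teacher horizon `T_max`. -/
def Tmax : ℝ :=
  S.N / (1000 * S.eta * S.m * S.P * S.sigma0 ^ 4 * S.sigman ^ 6 * (S.d : ℝ) ^ 3 *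
    Real.log ((16 : ℝ) * S.N * S.m * S.P / S.delta) ^ 2)

end Setting

/-!
Up to cross terms of relative size `√(log)/√d`, a noise correlation is driven by its own
coefficient, and a coefficient grows by at most the gradient weight of its sample times the squared
correlation. The gradient weight spent on learnable samples is paid for by the signal: a positive
signal weight `w` obeys `w' ≥ w + c x w²`, where `x` is the weight spent in one step, so that `x` is
at most a multiple of the drop of `1/w`, and the total telescopes.

While no signal weight has passed `1/(αm)`, learnable margins are bounded, so every step costs a
fixed drop of `1/w`; since some neuron starts with `1/w ≤ 2/σ₀`, there are too few such steps for
any coefficient to grow. Afterwards `1/w ≤ αm`, and the remaining budget only affords the claimed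
bound on learnable coefficients, provided that the unlearnable ones stay below
`10 (log T)^{1/3}/(σ_n² d)`. They do: beyond `8 (log T)^{1/3}/(σ_n² d)` a single patch makes the
margin exceed `2 log T`, hence the gradient weight drops below `T⁻²`.
-/

theorem phi_sub_phi_neg (z : ℝ) : phi z - phi (-z) = z ^ 3 := by
  unfold phi
  rcases le_total 0 z with h | h
  · rw [max_eq_right h, max_eq_left (by linarith)]; ring
  · rw [max_eq_left h, max_eq_right (by linarith)]; ring

theorem psi_pos (z : ℝ) : 0 < psi z := by unfold psi; positivity

theorem psi_le_one (z : ℝ) : psi z ≤ 1 :=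
  div_le_one_of_le₀ (by linarith [Real.exp_pos z]) (by positivity)

theorem psi_le_exp_neg (z : ℝ) : psi z ≤ Real.exp (-z) := by
  rw [psi, Real.exp_neg, ← one_div]
  exact one_div_le_one_div_of_le (Real.exp_pos z) (by linarith)

theorem one_div_nine_le_psi {z : ℝ} (hz : z ≤ 2) : 1 / 9 ≤ psi z := by
  have hexp : Real.exp z ≤ 8 := by
    calc Real.exp z ≤ Real.exp (1 + 1) := Real.exp_le_exp.mpr (by linarith)
      _ = Real.exp 1 * Real.exp 1 := Real.exp_add 1 1
      _ ≤ 2.8 * 2.8 := by gcongr <;> linarith [Real.exp_one_lt_d9]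
      _ ≤ 8 := by norm_num
  exact one_div_le_one_div_of_le (by positivity) (by linarith)

theorem mul_exp_neg_cube_half_le_one {z : ℝ} (hz : 0 ≤ z) : z * Real.exp (-(z ^ 3 / 2)) ≤ 1 := by
  rw [Real.exp_neg, ← div_eq_mul_inv, div_le_one (Real.exp_pos _)]
  have h := Real.add_one_le_exp (z ^ 3 / 2)
  nlinarith [mul_nonneg hz (sq_nonneg (z - 1)), sq_nonneg (z - 1)]

theorem cube_le_cube {a b : ℝ} (h : a ≤ b) : a ^ 3 ≤ b ^ 3 :=
  (Odd.strictMono_pow (by decide)).monotone h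

theorem rpow_div_three_pow_three {x : ℝ} (hx : 0 ≤ x) (n : ℕ) :
    (x ^ ((n : ℝ) / 3)) ^ 3 = x ^ n := by
  rw [← Real.rpow_natCast, ← Real.rpow_mul hx, ← Real.rpow_natCast]
  norm_num

theorem mul_cube_le_half {c V : ℝ} (hc : 1 ≤ c) (hV : 0 ≤ V) (h : c * V ≤ 1 / 2) :
    c * V ^ 3 ≤ 1 / 2 := by
  have hV1 : V ≤ 1 := (le_mul_of_one_le_left hV hc).trans (h.trans (by norm_num))
  calc c * V ^ 3 = c * V * V ^ 2 := by ring
    _ ≤ 1 / 2 * 1 ^ 2 := by gcongr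
    _ = 1 / 2 := by norm_num

theorem le_one_of_mul_cube_le_half {c V : ℝ} (hc : 1 ≤ c) (h : c * V ^ 3 ≤ 1 / 2) : V ≤ 1 := by
  by_contra! hV
  have hcV : 1 ≤ c * V ^ 3 := one_le_mul_of_one_le_of_one_le hc (one_le_pow₀ hV.le)
  linarith

theorem sq_le_of_cube_le {a n : ℝ} (hn : 1 ≤ n) (h : a ^ 3 ≤ n) (ha : 0 ≤ a) : a ^ 2 ≤ n := by
  rcases le_total a 1 with ha1 | ha1
  · exact (pow_le_one₀ ha ha1).trans hn
  · exact (pow_le_pow_right₀ ha1 (by norm_num)).trans h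

theorem mul_le_one_of_le_inv_div {c x a l : ℝ} (hc : 0 < c) (ha : 0 < a) (hl : 0 < l)
    (h : x ≤ c⁻¹ * (1 / a) / l) : c * (x * a * l) ≤ 1 := by
  have hrw : c⁻¹ * (1 / a) / l = 1 / (c * (a * l)) := by field_simp
  rw [hrw, le_div_iff₀ (by positivity)] at h
  linarith

theorem half_le_inv_sub_inv {w w' x : ℝ} (hw : 0 < w) (hx : 0 ≤ x) (hlow : w + x * w ^ 2 ≤ w')
    (hup : w' ≤ 2 * w) : x / 2 ≤ w⁻¹ - w'⁻¹ := by
  have hw' : 0 < w' := hw.trans_le (by nlinarith [sq_nonneg w])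
  rw [inv_sub_inv hw.ne' hw'.ne']
  calc x / 2 = x * w ^ 2 / (w * (2 * w)) := by field_simp
    _ ≤ (w' - w) / (w * w') := by
      apply div_le_div₀ <;> first | positivity | nlinarith [mul_nonneg hx (sq_nonneg w)]

section CubeSums

variable {ι : Type*} {s : Finset ι} {a : ι → ℝ} {V : ℝ}

theorem sum_cube_le_card_mul (h : ∀ i ∈ s, a i ≤ V) : ∑ i ∈ s, a i ^ 3 ≤ s.card * V ^ 3 := by
  rw [← nsmul_eq_mul]
  exact sum_le_card_nsmul s _ _ fun i hi => cube_le_cube (h i hi)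

theorem neg_card_mul_le_sum_cube (h : ∀ i ∈ s, -V ≤ a i) :
    -(s.card * V ^ 3) ≤ ∑ i ∈ s, a i ^ 3 := by
  rw [← mul_neg, ← Odd.neg_pow (by decide), ← nsmul_eq_mul]
  exact card_nsmul_le_sum s _ _ fun i hi => cube_le_cube (h i hi)

theorem cube_sub_card_mul_le_sum_cube (hV : 0 ≤ V) (h : ∀ i ∈ s, -V ≤ a i) {k : ι} (hk : k ∈ s) :
    a k ^ 3 - s.card * V ^ 3 ≤ ∑ i ∈ s, a i ^ 3 := by
  have hterm : ∀ i ∈ s, 0 ≤ a i ^ 3 + V ^ 3 := fun i hi => by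
    have := cube_le_cube (h i hi)
    rw [Odd.neg_pow (by decide)] at this
    linarith
  have hsingle : a k ^ 3 + V ^ 3 ≤ ∑ i ∈ s, (a i ^ 3 + V ^ 3) := single_le_sum hterm hk
  rw [sum_add_distrib, sum_const, nsmul_eq_mul] at hsingle
  have : 0 ≤ V ^ 3 := by positivity
  linarith

end CubeSums

section Dot

variable {d : ℕ}

theorem dot_comm (a b : Fin d → ℝ) : dot a b = dot b a := dotProduct_comm a b

theorem dot_add_left (a b c : Fin d → ℝ) : dot (a + b) c = dot a c + dot b c :=
  add_dotProduct a b c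

theorem dot_smul_left (c : ℝ) (a b : Fin d → ℝ) : dot (c • a) b = c * dot a b :=
  smul_dotProduct c a b

theorem dot_smul_right (c : ℝ) (a b : Fin d → ℝ) : dot a (c • b) = c * dot a b :=
  dotProduct_smul c a b

theorem dot_sum_left {ι : Type*} (s : Finset ι) (f : ι → Fin d → ℝ) (c : Fin d → ℝ) :
    dot (∑ k ∈ s, f k) c = ∑ k ∈ s, dot (f k) c :=
  sum_dotProduct s f c

theorem dot_e1 (hd : 0 < d) (a : Fin d → ℝ) : dot a (e1 d hd) = a ⟨0, hd⟩ := by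
  simp [dot, e1]

theorem dot_e1_e1 (hd : 0 < d) : dot (e1 d hd) (e1 d hd) = 1 := by
  simp [dot_e1, e1]

end Dot

namespace Setting

section Basic

variable (S : Setting)

theorem one_le_N : (1 : ℝ) ≤ S.N := by exact_mod_cast S.hN

theorem one_le_m : (1 : ℝ) ≤ S.m := by exact_mod_cast S.hm

theorem one_le_P : (1 : ℝ) ≤ S.P := by exact_mod_cast S.hP

theorem one_le_sqrt_dim : 1 ≤ Real.sqrt S.d :=
  Real.one_le_sqrt.mpr (by exact_mod_cast S.hd)

theorem sqrt_dim_sq : Real.sqrt S.d ^ 2 = S.d := Real.sq_sqrt (Nat.cast_nonneg _)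

theorem card_SL_add_card_SU : (S.SL.card : ℝ) + S.SU.card = S.N := by
  have h := card_union_of_disjoint S.hdisj
  rw [S.hunion, card_univ, Fintype.card_fin] at h
  exact_mod_cast h.symm

theorem card_SL_le : (S.SL.card : ℝ) ≤ S.N := by
  linarith [S.card_SL_add_card_SU, Nat.cast_nonneg (α := ℝ) S.SU.card]

theorem pun_mul_N : S.pun * S.N = S.SU.card :=
  div_mul_cancel₀ _ (by linarith [S.one_le_N])

theorem N_mul_one_sub_pun : S.N * (1 - S.pun) = S.SL.card := by
  linarith [S.pun_mul_N, S.card_SL_add_card_SU]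

theorem mem_SL_or_mem_SU (i : Fin S.N) : i ∈ S.SL ∨ i ∈ S.SU :=
  mem_union.mp (S.hunion ▸ mem_univ i)

theorem y_mul_self (i : Fin S.N) : S.y i * S.y i = 1 := by
  rcases S.hy i with h | h <;> rw [h] <;> norm_num

theorem abs_y_mul (i : Fin S.N) (z : ℝ) : |S.y i * z| = |z| := by
  rcases S.hy i with h | h <;> rw [h] <;> simp

theorem y_mul_cube (i : Fin S.N) (z : ℝ) : S.y i * z ^ 3 = (S.y i * z) ^ 3 := by
  rcases S.hy i with h | h <;> rw [h] <;> ring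

end Basic

section Scales

variable (S : Setting)

/-- The typical norm `σ_n √d` of a noise patch. -/
def noiseNorm : ℝ := S.sigman * Real.sqrt S.d

/-- The logarithmic factor `log(TNmP/δ)` of Condition (H). -/
def logScale : ℝ := Real.log ((S.T : ℝ) * S.N * S.m * S.P / S.delta)

/-- The logarithmic factor of the initial noise correlations, property (P6). -/
def logInit : ℝ := Real.log ((16 : ℝ) * S.N * S.m * S.P / S.delta)

/-- The logarithmic factor of the correlations between noise patches, property (P2). -/
def logCross : ℝ := Real.log ((16 : ℝ) * S.N ^ 2 * S.P ^ 2 / S.delta)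

/-- The bound on the initial signal weights, property (P5). -/
def initSignalBound : ℝ := S.sigma0 * Real.sqrt (2 * Real.log ((16 : ℝ) * S.m / S.delta))

/-- The bound on the initial noise correlations, property (P6). -/
def initBound : ℝ := 2 * S.sigma0 * S.noiseNorm * Real.sqrt S.logInit

/-- The bound on inner products of distinct noise patches, property (P2). -/
def crossBound : ℝ := 2 * S.noiseNorm ^ 2 * Real.sqrt S.logCross / Real.sqrt S.d

/-- The scale `(log T)^{1/3}` of a saturated noise correlation. -/
def satScale : ℝ := Real.log S.T ^ ((1 : ℝ) / 3)

/-- The part `σ_0/(σ_n √d)` of the bound on learnable coefficients that comes from the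
initialization. -/
def baseCoef : ℝ := S.sigma0 / S.noiseNorm

/-- The factor of `(ρ_max^{S_U})²` in the bound on learnable coefficients, see `quadCoef_eq`. -/
def quadCoef : ℝ := S.SU.card * S.noiseNorm ^ 2 / (100 * Real.sqrt S.d * S.satScale ^ 2)

/-- The sensitivity of learnable noise correlations to the size of unlearnable coefficients. The
factor `21/20` exceeds `1` to absorb the cross terms between learnable samples. -/
def corrSlope : ℝ := 21 / 20 * (S.crossBound * S.P * S.SU.card)

/-- The bound on learnable noise correlations when unlearnable coefficients are at most `M`. -/
def corrBound (M : ℝ) : ℝ := 3 / 2 * S.initBound + S.corrSlope * M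

/-- The ceiling that unlearnable noise coefficients never exceed. -/
def coefCap : ℝ := 10 * S.satScale / S.noiseNorm ^ 2

/-- The signal weight beyond which a neuron has learned the signal. -/
def signalThreshold : ℝ := 1 / (S.alpha * S.m)

/-- The step size `3η/N` of the noise coefficients. -/
def stepSize : ℝ := 3 * S.eta / S.N

theorem noiseNorm_pos : 0 < S.noiseNorm :=
  mul_pos S.hsigman (by linarith [S.one_le_sqrt_dim])

theorem baseCoef_pos : 0 < S.baseCoef := div_pos S.hsigma0 S.noiseNorm_pos

theorem quadCoef_nonneg : 0 ≤ S.quadCoef := by unfold quadCoef; positivity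

theorem initSignalBound_nonneg : 0 ≤ S.initSignalBound :=
  mul_nonneg S.hsigma0.le (Real.sqrt_nonneg _)

theorem initBound_nonneg : 0 ≤ S.initBound := by
  have := S.hsigma0
  have := S.noiseNorm_pos
  unfold initBound; positivity

theorem crossBound_nonneg : 0 ≤ S.crossBound := by unfold crossBound; positivity

theorem corrSlope_nonneg : 0 ≤ S.corrSlope := by
  have := S.crossBound_nonneg
  unfold corrSlope; positivity

theorem corrBound_mono : Monotone S.corrBound := fun _ _ h =>
  add_le_add_right (mul_le_mul_of_nonneg_left h S.corrSlope_nonneg) _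

theorem initBound_le_corrBound {M : ℝ} (hM : 0 ≤ M) : 3 / 2 * S.initBound ≤ S.corrBound M :=
  le_add_of_nonneg_right (mul_nonneg S.corrSlope_nonneg hM)

theorem corrBound_nonneg {M : ℝ} (hM : 0 ≤ M) : 0 ≤ S.corrBound M :=
  le_trans (by linarith [S.initBound_nonneg]) (S.initBound_le_corrBound hM)

theorem signalThreshold_pos : 0 < S.signalThreshold :=
  one_div_pos.mpr (mul_pos S.halpha (by linarith [S.one_le_m]))

theorem stepSize_pos : 0 < S.stepSize :=
  div_pos (mul_pos three_pos S.heta) (by linarith [S.one_le_N])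

theorem satScale_nonneg : 0 ≤ S.satScale := Real.rpow_nonneg (Real.log_natCast_nonneg _) _

theorem coefCap_nonneg : 0 ≤ S.coefCap :=
  div_nonneg (mul_nonneg (by norm_num) S.satScale_nonneg) (sq_nonneg _)

theorem satScale_pow_three : S.satScale ^ 3 = Real.log S.T := by
  simpa [satScale] using rpow_div_three_pow_three (Real.log_natCast_nonneg S.T) 1

theorem satScale_sq : S.satScale ^ 2 = Real.log S.T ^ ((2 : ℝ) / 3) := by
  rw [satScale, ← Real.rpow_natCast, ← Real.rpow_mul (Real.log_natCast_nonneg _)]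
  norm_num

theorem quadCoef_eq : S.quadCoef =
    S.pun * S.N * S.sigman ^ 2 * Real.sqrt S.d / (100 * Real.log S.T ^ ((2 : ℝ) / 3)) := by
  rw [quadCoef, pun_mul_N, ← satScale_sq, noiseNorm]
  field_simp

theorem corrBound_coefCap_eq : S.corrBound S.coefCap =
    3 * S.sigma0 * S.noiseNorm * Real.sqrt S.logInit +
      21 * S.SU.card * S.P * S.satScale / Real.sqrt S.d * Real.sqrt S.logCross := by
  have hν := S.noiseNorm_pos.ne'
  rw [corrBound, corrSlope, coefCap, initBound, crossBound]
  field_simp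
  ring

theorem half_le_logScale (hT : (1 : ℝ) ≤ S.T) (hP : (2 : ℝ) ≤ S.P) : 1 / 2 ≤ S.logScale := by
  have h2 : (2 : ℝ) ≤ S.T * S.N * S.m * S.P / S.delta := by
    rw [le_div_iff₀ S.hdelta0]
    calc 2 * S.delta ≤ 1 * 1 * 1 * 2 := by linarith [S.hdelta1]
      _ ≤ S.T * S.N * S.m * S.P := by
        gcongr
        · exact S.one_le_N
        · exact S.one_le_m
  calc 1 / 2 ≤ Real.log 2 := by linarith [Real.log_two_gt_d9]
    _ ≤ S.logScale := Real.log_le_log two_pos h2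

theorem one_le_logCross : 1 ≤ S.logCross := by
  have hδ := S.hdelta0
  have hN := S.one_le_N
  have hP := S.one_le_P
  rw [logCross, Real.le_log_iff_exp_le (by positivity), le_div_iff₀ hδ]
  calc Real.exp 1 * S.delta ≤ 16 * 1 := by
        gcongr
        · linarith [Real.exp_one_lt_d9]
        · exact S.hdelta1.le
    _ = 16 * 1 ^ 2 * 1 ^ 2 := by norm_num
    _ ≤ 16 * S.N ^ 2 * S.P ^ 2 := by gcongr

theorem one_le_sqrt_logCross : 1 ≤ Real.sqrt S.logCross :=
  Real.one_le_sqrt.mpr S.one_le_logCross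

end Scales

/-- The part of Condition (H) and of the sparse regime that controls the noise, cleared of
denominators; `10³` stands for the universal constant `C`. -/
structure NoiseRegime (S : Setting) : Prop where
  sqrt_dim_le_T : Real.sqrt S.d ≤ S.T
  dim : 10 ^ 3 * (S.m * S.P * S.N * S.logScale ^ 2) ≤ Real.sqrt S.d
  signal : (10 ^ 3 * (S.noiseNorm * S.logScale)) ^ 3 ≤ S.alpha ^ 3 * S.SL.card
  init_noise : 10 ^ 3 * (S.sigma0 * S.noiseNorm * Real.sqrt S.d * S.m ^ 2 * S.logScale) ≤ 1
  init_signal : (10 ^ 3 * (S.sigma0 * S.alpha * S.logScale)) ^ 3 * S.m ^ 2 ≤ 1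
  rate_noise : 10 ^ 3 * (S.eta * S.noiseNorm ^ 2 * S.logScale) ≤ 1
  rate_signal : 10 ^ 3 * (S.eta * S.alpha ^ 2 * S.logScale) ≤ 1
  ten_mul_eps_le : 10 * S.eps ≤ S.alpha
  three_le_m : (3 : ℝ) ≤ S.m
  two_le_P : (2 : ℝ) ≤ S.P
  card_SU_mul_P_le : (S.SU.card : ℝ) * S.P ≤ Real.log S.d

namespace NoiseRegime

variable {S : Setting} (h : S.NoiseRegime)

include h

theorem sixteen_le_T : (16 : ℝ) ≤ S.T := by
  have hL := S.half_le_logScale (S.one_le_sqrt_dim.trans h.sqrt_dim_le_T) h.two_le_P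
  calc (16 : ℝ) ≤ 10 ^ 3 * (1 * 1 * 1 * (1 / 2) ^ 2) := by norm_num
    _ ≤ 10 ^ 3 * (S.m * S.P * S.N * S.logScale ^ 2) := by
      gcongr
      · exact S.one_le_m
      · exact S.one_le_P
      · exact S.one_le_N
    _ ≤ S.T := h.dim.trans h.sqrt_dim_le_T

theorem one_le_log_T : 1 ≤ Real.log S.T := by
  have hT := h.sixteen_le_T
  rw [Real.le_log_iff_exp_le (by linarith)]
  linarith [Real.exp_one_lt_d9]

theorem log_T_le_logScale : Real.log S.T ≤ S.logScale := by
  have hδ := S.hdelta0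
  have hT := h.sixteen_le_T
  refine Real.log_le_log (by linarith) ?_
  rw [le_div_iff₀ hδ]
  calc S.T * S.delta ≤ S.T * 1 * 1 * 1 := by nlinarith [S.hdelta1]
    _ ≤ S.T * S.N * S.m * S.P := by
      gcongr
      · exact S.one_le_N
      · exact S.one_le_m
      · exact S.one_le_P

theorem one_le_logScale : 1 ≤ S.logScale := h.one_le_log_T.trans h.log_T_le_logScale

theorem card_SU_mul_P_le_logScale : S.SU.card * S.P ≤ 2 * S.logScale := by
  have hd : Real.log S.d = 2 * Real.log (Real.sqrt S.d) := by
    rw [Real.log_sqrt (Nat.cast_nonneg _)]; ring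
  have hsqrt := Real.log_le_log (by linarith [S.one_le_sqrt_dim]) h.sqrt_dim_le_T
  linarith [h.card_SU_mul_P_le, h.log_T_le_logScale]

theorem four_le_logInit : 4 ≤ S.logInit := by
  have hδ := S.hdelta0
  have hm := h.three_le_m
  have hP := h.two_le_P
  have hexp : Real.exp 4 ≤ 81 := by
    calc Real.exp 4 = Real.exp 1 ^ 4 := by rw [← Real.exp_nat_mul]; norm_num
      _ ≤ 3 ^ 4 := by gcongr; linarith [Real.exp_one_lt_d9]
      _ = 81 := by norm_num
  rw [logInit, Real.le_log_iff_exp_le (by have := S.one_le_N; positivity), le_div_iff₀ hδ]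
  calc Real.exp 4 * S.delta ≤ 81 * 1 := by gcongr; exact S.hdelta1.le
    _ ≤ 16 * 1 * 3 * 2 := by norm_num
    _ ≤ 16 * S.N * S.m * S.P := by gcongr; exact S.one_le_N

theorem logInit_le_logScale : S.logInit ≤ S.logScale := by
  have hδ := S.hdelta0
  have hN := S.one_le_N
  have hm := S.one_le_m
  have hP := S.one_le_P
  refine Real.log_le_log (by positivity) ?_
  gcongr
  exact h.sixteen_le_T

theorem logCross_le_logScale : S.logCross ≤ 2 * S.logScale := by
  have hδ := S.hdelta0
  have hN := S.one_le_N
  have hm := S.one_le_m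
  have hP := S.one_le_P
  have hsq : 2 * S.logScale = Real.log (((S.T : ℝ) * S.N * S.m * S.P / S.delta) ^ 2) := by
    rw [Real.log_pow]; rfl
  rw [hsq]
  refine Real.log_le_log (by positivity) ?_
  calc 16 * (S.N : ℝ) ^ 2 * S.P ^ 2 / S.delta = (4 * S.N * 1 * S.P) ^ 2 / S.delta := by ring
    _ ≤ (S.T * S.N * S.m * S.P) ^ 2 / S.delta := by
      gcongr
      linarith [h.sixteen_le_T]
    _ ≤ (S.T * S.N * S.m * S.P) ^ 2 / S.delta ^ 2 := by
      gcongr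
      exact pow_le_of_le_one hδ.le S.hdelta1.le two_ne_zero
    _ = (S.T * S.N * S.m * S.P / S.delta) ^ 2 := (div_pow _ _ _).symm

theorem initSignalBound_le : S.initSignalBound ≤ 2 * (S.sigma0 * S.logScale) := by
  have hσ := S.hsigma0
  have hL := h.one_le_logScale
  have hlog : Real.log (16 * S.m / S.delta) ≤ S.logInit := by
    refine Real.log_le_log (div_pos (by linarith [S.one_le_m]) S.hdelta0) ?_
    have hδ := S.hdelta0
    rw [div_le_div_iff_of_pos_right hδ]
    calc (16 : ℝ) * S.m = 16 * 1 * S.m * 1 := by ring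
      _ ≤ 16 * S.N * S.m * S.P := by
        gcongr
        · exact S.one_le_N
        · exact S.one_le_P
  have hsqrt : Real.sqrt (2 * Real.log (16 * S.m / S.delta)) ≤ 2 * S.logScale := by
    rw [Real.sqrt_le_left (by linarith)]
    nlinarith [h.logInit_le_logScale]
  calc S.initSignalBound ≤ S.sigma0 * (2 * S.logScale) := by unfold initSignalBound; gcongr
    _ = 2 * (S.sigma0 * S.logScale) := by ring

theorem one_le_satScale : 1 ≤ S.satScale := Real.one_le_rpow h.one_le_log_T (by norm_num)

theorem satScale_sq_le : S.satScale ^ 2 ≤ S.logScale := by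
  refine le_trans ?_ h.log_T_le_logScale
  rw [← S.satScale_pow_three]
  exact pow_le_pow_right₀ h.one_le_satScale (by norm_num)

theorem satScale_le : S.satScale ≤ S.logScale :=
  (le_self_pow₀ h.one_le_satScale two_ne_zero).trans h.satScale_sq_le

theorem sqrt_logInit_sq_le : Real.sqrt S.logInit ^ 2 ≤ S.logScale := by
  rw [Real.sq_sqrt (by linarith [h.four_le_logInit])]
  exact h.logInit_le_logScale

theorem two_le_sqrt_logInit : 2 ≤ Real.sqrt S.logInit :=
  Real.le_sqrt_of_sq_le (by linarith [h.four_le_logInit])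

theorem sqrt_logInit_le : Real.sqrt S.logInit ≤ S.logScale :=
  (le_self_pow₀ (by linarith [h.two_le_sqrt_logInit]) two_ne_zero).trans h.sqrt_logInit_sq_le

theorem sqrt_logCross_sq_le : Real.sqrt S.logCross ^ 2 ≤ 2 * S.logScale := by
  rw [Real.sq_sqrt (by linarith [S.one_le_logCross])]
  exact h.logCross_le_logScale

theorem sqrt_logCross_le : Real.sqrt S.logCross ≤ 2 * S.logScale :=
  (le_self_pow₀ S.one_le_sqrt_logCross two_ne_zero).trans h.sqrt_logCross_sq_le

theorem satScale_mul_sqrt_logCross_le : S.satScale * Real.sqrt S.logCross ≤ 2 * S.logScale := by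
  have hL := h.one_le_logScale
  refine le_of_sq_le_sq ?_ (by linarith)
  calc (S.satScale * Real.sqrt S.logCross) ^ 2 = S.satScale ^ 2 * Real.sqrt S.logCross ^ 2 :=
        mul_pow _ _ _
    _ ≤ S.logScale * (2 * S.logScale) := by
      gcongr
      · exact h.satScale_sq_le
      · exact h.sqrt_logCross_sq_le
    _ ≤ (2 * S.logScale) ^ 2 := by nlinarith

theorem P_le_sqrt_dim : S.P ≤ Real.sqrt S.d := by
  have hL := h.one_le_logScale
  refine le_trans ?_ h.dim
  calc (S.P : ℝ) = 1 * (1 * S.P * 1 * 1 ^ 2) := by ring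
    _ ≤ 10 ^ 3 * (S.m * S.P * S.N * S.logScale ^ 2) := by
      gcongr
      · norm_num
      · exact S.one_le_m
      · exact S.one_le_N

theorem crossBound_mul_le : S.crossBound * S.P * S.N ≤ S.noiseNorm ^ 2 / 2 := by
  have hL := h.one_le_logScale
  have hD : 0 < Real.sqrt S.d := by linarith [S.one_le_sqrt_dim]
  calc S.crossBound * S.P * S.N
      = S.noiseNorm ^ 2 * (2 * (1 * S.P * S.N * Real.sqrt S.logCross)) / Real.sqrt S.d := by
        rw [crossBound]; ring
    _ ≤ S.noiseNorm ^ 2 * (2 * (S.m * S.P * S.N * (2 * S.logScale ^ 2))) / Real.sqrt S.d := by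
      gcongr
      · exact S.one_le_m
      · exact h.sqrt_logCross_le.trans (by gcongr; exact le_self_pow₀ hL two_ne_zero)
    _ ≤ S.noiseNorm ^ 2 * (Real.sqrt S.d / 2) / Real.sqrt S.d := by
      gcongr
      linarith [h.dim, show 0 ≤ S.m * S.P * S.N * S.logScale ^ 2 by positivity]
    _ = S.noiseNorm ^ 2 / 2 := by field_simp

theorem one_le_card_SL : (1 : ℝ) ≤ S.SL.card := by
  have hν := S.noiseNorm_pos
  have hL := h.one_le_logScale
  have hpos : 0 < S.alpha ^ 3 * S.SL.card := lt_of_lt_of_le (by positivity) h.signal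
  exact_mod_cast pos_of_mul_pos_right hpos (pow_nonneg S.halpha.le 3)

theorem noise_sq_le_alpha_sq : (10 ^ 3 * (S.noiseNorm * S.logScale)) ^ 2 ≤ S.alpha ^ 2 * S.N := by
  have hα := S.halpha
  have hν := S.noiseNorm_pos
  have hL := h.one_le_logScale
  have hcube : (10 ^ 3 * (S.noiseNorm * S.logScale) / S.alpha) ^ 3 ≤ S.SL.card := by
    rw [div_pow, div_le_iff₀' (by positivity)]
    exact h.signal
  have hsq := (sq_le_of_cube_le h.one_le_card_SL hcube (by positivity)).trans S.card_SL_le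
  rwa [div_pow, div_le_iff₀' (by positivity)] at hsq

theorem noise_le_alpha_sq_mul_sqrt_dim :
    10 ^ 9 * (S.noiseNorm ^ 2 * S.m * S.P * S.logScale ^ 4) ≤ S.alpha ^ 2 * Real.sqrt S.d := by
  refine le_of_mul_le_mul_right ?_ (by linarith [S.one_le_N] : (0 : ℝ) < S.N)
  calc 10 ^ 9 * (S.noiseNorm ^ 2 * S.m * S.P * S.logScale ^ 4) * S.N
      = (10 ^ 3 * (S.noiseNorm * S.logScale)) ^ 2 *
          (10 ^ 3 * (S.m * S.P * S.N * S.logScale ^ 2)) := by ring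
    _ ≤ S.alpha ^ 2 * S.N * Real.sqrt S.d :=
      mul_le_mul h.noise_sq_le_alpha_sq h.dim (by positivity) (by positivity)
    _ = S.alpha ^ 2 * Real.sqrt S.d * S.N := by ring

theorem base_growth_le :
    (3 / 2 * S.noiseNorm ^ 2 + S.crossBound * S.P * S.N) * S.baseCoef ≤ S.initBound / 2 := by
  have hσ := S.hsigma0
  have hν := S.noiseNorm_pos
  calc (3 / 2 * S.noiseNorm ^ 2 + S.crossBound * S.P * S.N) * S.baseCoef
      ≤ 2 * S.noiseNorm ^ 2 * S.baseCoef := by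
        have := S.baseCoef_pos
        gcongr
        linarith [h.crossBound_mul_le]
    _ = S.sigma0 * S.noiseNorm * 2 := by rw [baseCoef]; field_simp
    _ ≤ S.sigma0 * S.noiseNorm * Real.sqrt S.logInit := by gcongr; exact h.two_le_sqrt_logInit
    _ = S.initBound / 2 := by rw [initBound]; ring

theorem quad_growth_le {M : ℝ} (hM : 0 ≤ M) (hMc : M ≤ S.coefCap) :
    (3 / 2 * S.noiseNorm ^ 2 + S.crossBound * S.P * S.N) * (S.quadCoef * M ^ 2) ≤
      S.crossBound * S.P * S.SU.card * M / 20 := by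
  have hν := S.noiseNorm_pos
  have hs := h.one_le_satScale
  have hD : 0 < Real.sqrt S.d := by linarith [S.one_le_sqrt_dim]
  have hQ := S.quadCoef_nonneg
  have hcap : M * S.noiseNorm ^ 2 ≤ 10 * S.satScale := by
    rw [← le_div_iff₀ (by positivity)]
    exact hMc
  calc (3 / 2 * S.noiseNorm ^ 2 + S.crossBound * S.P * S.N) * (S.quadCoef * M ^ 2)
      ≤ 2 * S.noiseNorm ^ 2 * (S.quadCoef * M ^ 2) := by
        gcongr
        linarith [h.crossBound_mul_le]
    _ = S.SU.card * S.noiseNorm ^ 2 * M / (50 * Real.sqrt S.d * S.satScale ^ 2) *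
          (M * S.noiseNorm ^ 2) := by rw [quadCoef]; field_simp; ring
    _ ≤ S.SU.card * S.noiseNorm ^ 2 * M / (50 * Real.sqrt S.d * S.satScale ^ 2) *
          (10 * S.satScale) := by gcongr
    _ = S.SU.card * S.noiseNorm ^ 2 * M / (5 * Real.sqrt S.d * S.satScale) := by field_simp; ring
    _ ≤ S.SU.card * S.noiseNorm ^ 2 * M / (5 * Real.sqrt S.d * 1) := by gcongr
    _ = S.noiseNorm ^ 2 * 1 * 2 * S.SU.card * M / (10 * Real.sqrt S.d) := by ring
    _ ≤ S.noiseNorm ^ 2 * Real.sqrt S.logCross * S.P * S.SU.card * M / (10 * Real.sqrt S.d) := by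
      gcongr
      · exact S.one_le_sqrt_logCross
      · exact h.two_le_P
    _ = S.crossBound * S.P * S.SU.card * M / 20 := by rw [crossBound]; ring

theorem corrBound_coefCap_le : S.m * S.P * S.corrBound S.coefCap ≤ 1 / 2 := by
  have hσ := S.hsigma0
  have hν := S.noiseNorm_pos
  have hm := S.one_le_m
  have hL := h.one_le_logScale
  have hs := S.satScale_nonneg
  have hD : 0 < Real.sqrt S.d := by linarith [S.one_le_sqrt_dim]
  have hinit : S.m * S.P * (3 * S.sigma0 * S.noiseNorm * Real.sqrt S.logInit) ≤ 1 / 4 := by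
    calc S.m * S.P * (3 * S.sigma0 * S.noiseNorm * Real.sqrt S.logInit)
        ≤ S.m ^ 2 * Real.sqrt S.d * (3 * S.sigma0 * S.noiseNorm * S.logScale) := by
          gcongr
          · exact le_self_pow₀ hm two_ne_zero
          · exact h.P_le_sqrt_dim
          · exact h.sqrt_logInit_le
      _ = 3 * (S.sigma0 * S.noiseNorm * Real.sqrt S.d * S.m ^ 2 * S.logScale) := by ring
      _ ≤ 1 / 4 := by linarith [h.init_noise]
  have hcross : S.m * S.P * (21 * S.SU.card * S.P * S.satScale / Real.sqrt S.d *
      Real.sqrt S.logCross) ≤ 1 / 4 := by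
    calc S.m * S.P * (21 * S.SU.card * S.P * S.satScale / Real.sqrt S.d * Real.sqrt S.logCross)
        = 21 * (S.m * S.P * 1) * (S.SU.card * S.P) * (S.satScale * Real.sqrt S.logCross) /
            Real.sqrt S.d := by ring
      _ ≤ 21 * (S.m * S.P * S.N) * (2 * S.logScale) * (2 * S.logScale) / Real.sqrt S.d := by
        gcongr ?_ * (?_ * ?_) * ?_ * ?_ / ?_
        · exact S.one_le_N
        · exact h.card_SU_mul_P_le_logScale
        · exact h.satScale_mul_sqrt_logCross_le
      _ = 84 * (S.m * S.P * S.N * S.logScale ^ 2) / Real.sqrt S.d := by ring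
      _ ≤ 1 / 4 := by
        rw [div_le_iff₀ hD]
        linarith [h.dim, show 0 ≤ S.m * S.P * S.N * S.logScale ^ 2 by positivity]
  rw [corrBound_coefCap_eq, mul_add]
  linarith

theorem corrBound_cube_le {M : ℝ} (hM : 0 ≤ M) (hMc : M ≤ S.coefCap) :
    S.m * S.P * S.corrBound M ^ 3 ≤ 1 / 2 := by
  refine mul_cube_le_half (one_le_mul_of_one_le_of_one_le S.one_le_m S.one_le_P)
    (S.corrBound_nonneg hM) (le_trans ?_ h.corrBound_coefCap_le)
  gcongr
  exact S.corrBound_mono hMc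

theorem corrBound_le_one {M : ℝ} (hM : 0 ≤ M) (hMc : M ≤ S.coefCap) : S.corrBound M ≤ 1 :=
  le_one_of_mul_cube_le_half (one_le_mul_of_one_le_of_one_le S.one_le_m S.one_le_P)
    (h.corrBound_cube_le hM hMc)

theorem initBound_sq_le_baseCoef :
    18 * S.m / S.alpha ^ 2 * S.initBound ^ 2 ≤ 9 / 10 * S.baseCoef := by
  have hσ := S.hsigma0
  have hν := S.noiseNorm_pos
  have hα := S.halpha
  have hm := S.one_le_m
  have hL := h.one_le_logScale
  have hD : 0 < Real.sqrt S.d := by linarith [S.one_le_sqrt_dim]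
  have hkey : 80 * (S.m * S.sigma0 * S.noiseNorm ^ 3 * S.logScale) ≤ S.alpha ^ 2 := by
    refine le_of_mul_le_mul_right ?_ hD
    calc 80 * (S.m * S.sigma0 * S.noiseNorm ^ 3 * S.logScale) * Real.sqrt S.d
        = 80 * S.noiseNorm ^ 2 *
            (S.sigma0 * S.noiseNorm * Real.sqrt S.d * S.m * S.logScale) := by ring
      _ ≤ 80 * S.noiseNorm ^ 2 *
            (S.sigma0 * S.noiseNorm * Real.sqrt S.d * S.m ^ 2 * S.logScale) := by
        gcongr
        exact le_self_pow₀ hm two_ne_zero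
      _ ≤ 80 * S.noiseNorm ^ 2 * 1 := by gcongr; linarith [h.init_noise]
      _ = 80 * (S.noiseNorm ^ 2 * 1 * 1 * 1 ^ 4) := by ring
      _ ≤ 10 ^ 9 * (S.noiseNorm ^ 2 * S.m * S.P * S.logScale ^ 4) := by
        gcongr
        · norm_num
        · exact S.one_le_P
      _ ≤ S.alpha ^ 2 * Real.sqrt S.d := h.noise_le_alpha_sq_mul_sqrt_dim
  calc 18 * S.m / S.alpha ^ 2 * S.initBound ^ 2
      = 72 * (S.m * S.sigma0 ^ 2 * S.noiseNorm ^ 2 * Real.sqrt S.logInit ^ 2) / S.alpha ^ 2 := by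
        rw [initBound]; ring
    _ ≤ 72 * (S.m * S.sigma0 ^ 2 * S.noiseNorm ^ 2 * S.logScale) / S.alpha ^ 2 := by
      gcongr
      exact h.sqrt_logInit_sq_le
    _ = 9 / 10 * S.baseCoef *
          (80 * (S.m * S.sigma0 * S.noiseNorm ^ 3 * S.logScale) / S.alpha ^ 2) := by
      rw [baseCoef]; field_simp; ring
    _ ≤ 9 / 10 * S.baseCoef :=
      mul_le_of_le_one_right (by linarith [S.baseCoef_pos]) ((div_le_one (by positivity)).mpr hkey)

theorem corrSlope_sq_le_quadCoef : 8 * S.m / S.alpha ^ 2 * S.corrSlope ^ 2 ≤ S.quadCoef := by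
  have hα := S.halpha
  have hL := h.one_le_logScale
  have hs := h.one_le_satScale
  have hD : 0 < Real.sqrt S.d := by linarith [S.one_le_sqrt_dim]
  have hkey : 3528 * (S.noiseNorm ^ 2 * S.m * S.P * (S.SU.card * S.P) *
      (S.satScale * Real.sqrt S.logCross) ^ 2) ≤ S.alpha ^ 2 * Real.sqrt S.d := by
    calc 3528 * (S.noiseNorm ^ 2 * S.m * S.P * (S.SU.card * S.P) *
          (S.satScale * Real.sqrt S.logCross) ^ 2)
        ≤ 3528 * (S.noiseNorm ^ 2 * S.m * S.P * (2 * S.logScale) * (2 * S.logScale) ^ 2) := by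
          gcongr 3528 * (_ * ?_ * ?_ ^ 2)
          · exact h.card_SU_mul_P_le_logScale
          · exact h.satScale_mul_sqrt_logCross_le
      _ = 28224 * (S.noiseNorm ^ 2 * S.m * S.P * S.logScale ^ 3) := by ring
      _ ≤ 10 ^ 9 * (S.noiseNorm ^ 2 * S.m * S.P * S.logScale ^ 4) := by
        gcongr <;> norm_num
      _ ≤ S.alpha ^ 2 * Real.sqrt S.d := h.noise_le_alpha_sq_mul_sqrt_dim
  calc 8 * S.m / S.alpha ^ 2 * S.corrSlope ^ 2
      = S.quadCoef * (3528 * (S.noiseNorm ^ 2 * S.m * S.P * (S.SU.card * S.P) *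
          (S.satScale * Real.sqrt S.logCross) ^ 2) / (S.alpha ^ 2 * Real.sqrt S.d)) := by
        rw [corrSlope, crossBound, quadCoef]; field_simp; ring
    _ ≤ S.quadCoef :=
      mul_le_of_le_one_right S.quadCoef_nonneg ((div_le_one (by positivity)).mpr hkey)

theorem initBound_sq_le_baseCoef_div_ten :
    72 / (S.alpha ^ 3 * S.SL.card * S.sigma0) * (3 / 2 * S.initBound) ^ 2 ≤ S.baseCoef / 10 := by
  have hσ := S.hsigma0
  have hν := S.noiseNorm_pos
  have hα := S.halpha
  have hn := h.one_le_card_SL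
  have hL := h.one_le_logScale
  have hkey : 6480 * (S.noiseNorm ^ 3 * S.logScale) ≤ S.alpha ^ 3 * S.SL.card := by
    calc 6480 * (S.noiseNorm ^ 3 * S.logScale) ≤ 10 ^ 9 * (S.noiseNorm ^ 3 * S.logScale ^ 3) := by
          gcongr
          · norm_num
          · exact le_self_pow₀ hL three_ne_zero
      _ = (10 ^ 3 * (S.noiseNorm * S.logScale)) ^ 3 := by ring
      _ ≤ S.alpha ^ 3 * S.SL.card := h.signal
  calc 72 / (S.alpha ^ 3 * S.SL.card * S.sigma0) * (3 / 2 * S.initBound) ^ 2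
      = 648 / (S.alpha ^ 3 * S.SL.card) *
          (S.sigma0 * S.noiseNorm ^ 2 * Real.sqrt S.logInit ^ 2) := by
        rw [initBound]; field_simp; ring
    _ ≤ 648 / (S.alpha ^ 3 * S.SL.card) * (S.sigma0 * S.noiseNorm ^ 2 * S.logScale) := by
      gcongr
      exact h.sqrt_logInit_sq_le
    _ = S.baseCoef / 10 *
          (6480 * (S.noiseNorm ^ 3 * S.logScale) / (S.alpha ^ 3 * S.SL.card)) := by
      rw [baseCoef]; field_simp; ring
    _ ≤ S.baseCoef / 10 :=
      mul_le_of_le_one_right (by linarith [S.baseCoef_pos]) ((div_le_one (by positivity)).mpr hkey)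

theorem rate_noise_mul_satScale_le : 768 * (S.eta * S.noiseNorm ^ 2) * S.satScale ≤ 1 := by
  have hη := S.heta
  have hs : S.eta * S.noiseNorm ^ 2 * S.satScale ≤ S.eta * S.noiseNorm ^ 2 * S.logScale := by
    gcongr
    exact h.satScale_le
  have hs0 : 0 ≤ S.eta * S.noiseNorm ^ 2 * S.satScale := by
    have := S.satScale_nonneg
    positivity
  linarith [h.rate_noise, hs0]

theorem nine_mul_rate_signal_le : 9 * (S.eta * S.alpha ^ 2) ≤ 1 := by
  have hη := S.heta
  have hL : S.eta * S.alpha ^ 2 * 1 ≤ S.eta * S.alpha ^ 2 * S.logScale := by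
    gcongr
    exact h.one_le_logScale
  linarith [h.rate_signal]

theorem initSignalBound_cube_le : S.m * (S.alpha * S.initSignalBound) ^ 3 ≤ 1 / 2 := by
  have hα := S.halpha
  have h0 := S.initSignalBound_nonneg
  calc S.m * (S.alpha * S.initSignalBound) ^ 3
      ≤ S.m ^ 2 * (S.alpha * (2 * (S.sigma0 * S.logScale))) ^ 3 := by
        gcongr
        · exact le_self_pow₀ S.one_le_m two_ne_zero
        · exact h.initSignalBound_le
    _ = 8 / 10 ^ 9 * ((10 ^ 3 * (S.sigma0 * S.alpha * S.logScale)) ^ 3 * S.m ^ 2) := by ring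
    _ ≤ 8 / 10 ^ 9 * 1 := by gcongr; exact h.init_signal
    _ ≤ 1 / 2 := by norm_num

theorem half_alpha_cube_le : S.alpha ^ 3 / 2 ≤ (S.alpha - S.eps) ^ 3 := by
  have hα := S.halpha
  calc S.alpha ^ 3 / 2 ≤ 729 / 1000 * S.alpha ^ 3 := by
        linarith [show 0 ≤ S.alpha ^ 3 by positivity]
    _ = (9 / 10 * S.alpha) ^ 3 := by ring
    _ ≤ (S.alpha - S.eps) ^ 3 := cube_le_cube (by linarith [h.ten_mul_eps_le])

theorem noiseNorm_sq_mul_baseCoef_le : S.noiseNorm ^ 2 * S.baseCoef ≤ 1 := by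
  have hσ := S.hsigma0
  have hν := S.noiseNorm_pos
  calc S.noiseNorm ^ 2 * S.baseCoef = S.sigma0 * S.noiseNorm * 1 * 1 ^ 2 * 1 := by
        rw [baseCoef]; field_simp
    _ ≤ S.sigma0 * S.noiseNorm * Real.sqrt S.d * S.m ^ 2 * S.logScale := by
      gcongr
      · exact S.one_le_sqrt_dim
      · exact S.one_le_m
      · exact h.one_le_logScale
    _ ≤ 1 := by linarith [h.init_noise]

end NoiseRegime

namespace CondH

variable {S : Setting} {C : ℝ}

theorem one_le_T (hH : S.CondH C) : (1 : ℝ) ≤ S.T := by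
  obtain ⟨hC, hT, -⟩ := hH
  have := S.heta
  have := S.hsigma0
  have := S.hsigman
  have := S.one_le_N
  have : (0 : ℝ) < S.d := by exact_mod_cast S.hd
  exact_mod_cast Nat.cast_pos.mp (lt_of_lt_of_le (by positivity) hT)

theorem two_le_P (hH : S.CondH C) : (2 : ℝ) ≤ S.P := by
  obtain ⟨-, -, -, -, -, -, -, -, -, -, hP, -⟩ := hH
  exact_mod_cast hP

theorem half_le_logScale (hH : S.CondH C) : 1 / 2 ≤ S.logScale :=
  S.half_le_logScale hH.one_le_T hH.two_le_P

theorem logScale_le (hH : S.CondH C) :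
    S.logScale ≤ Real.log ((S.T : ℝ) * S.d * S.N * S.m * S.P / S.delta) := by
  have hδ := S.hdelta0
  have hT := hH.one_le_T
  have hN := S.one_le_N
  have hm := S.one_le_m
  have hP := S.one_le_P
  refine Real.log_le_log (by positivity) ?_
  gcongr
  exact le_mul_of_one_le_right (by positivity) (by exact_mod_cast S.hd)

theorem init_noise (hH : S.CondH C) :
    C * (S.sigma0 * S.noiseNorm * Real.sqrt S.d * S.m ^ 2 * S.logScale) ≤ 1 := by
  have hσ := S.hsigma0
  have hσn := S.hsigman
  have hm := S.one_le_m
  have hP := S.one_le_P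
  have hd : (0 : ℝ) < S.d := by exact_mod_cast S.hd
  have hL := hH.half_le_logScale
  have hLd := hH.logScale_le
  obtain ⟨hC, -, -, -, hσ0, -⟩ := hH
  have hscale : C * (S.sigma0 * (S.sigman * S.m ^ 2 * Real.sqrt S.P * S.d) *
      Real.log ((S.T : ℝ) * S.d * S.N * S.m * S.P / S.delta)) ≤ 1 := by
    refine mul_le_one_of_le_inv_div (by linarith) (by positivity) (by linarith) (hσ0.trans ?_)
    gcongr
    · linarith
    · exact min_le_right _ _
  calc C * (S.sigma0 * S.noiseNorm * Real.sqrt S.d * S.m ^ 2 * S.logScale)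
      = C * (S.sigma0 * (S.sigman * S.m ^ 2 * 1 * Real.sqrt S.d ^ 2) * S.logScale) := by
        rw [noiseNorm]; ring
    _ = C * (S.sigma0 * (S.sigman * S.m ^ 2 * 1 * S.d) * S.logScale) := by rw [sqrt_dim_sq]
    _ ≤ C * (S.sigma0 * (S.sigman * S.m ^ 2 * Real.sqrt S.P * S.d) *
          Real.log ((S.T : ℝ) * S.d * S.N * S.m * S.P / S.delta)) := by
      gcongr
      exact Real.one_le_sqrt.mpr hP
    _ ≤ 1 := hscale

theorem init_signal (hH : S.CondH C) :
    (C * (S.sigma0 * S.alpha * S.logScale)) ^ 3 * S.m ^ 2 ≤ 1 := by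
  have hσ := S.hsigma0
  have hα := S.halpha
  have hm := S.one_le_m
  have hL := hH.half_le_logScale
  have hLd := hH.logScale_le
  obtain ⟨hC, -, -, -, hσ0, -⟩ := hH
  have hscale : C * (S.sigma0 * (S.alpha * (S.m : ℝ) ^ ((2 : ℝ) / 3)) *
      Real.log ((S.T : ℝ) * S.d * S.N * S.m * S.P / S.delta)) ≤ 1 := by
    refine mul_le_one_of_le_inv_div (by linarith) (by positivity) (by linarith) (hσ0.trans ?_)
    gcongr
    · linarith
    · exact (min_le_left _ _).trans (min_le_right _ _)
  calc (C * (S.sigma0 * S.alpha * S.logScale)) ^ 3 * S.m ^ 2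
      = (C * (S.sigma0 * (S.alpha * (S.m : ℝ) ^ ((2 : ℝ) / 3)) * S.logScale)) ^ 3 := by
        rw [← rpow_div_three_pow_three (by positivity : (0 : ℝ) ≤ S.m)]
        push_cast
        ring
    _ ≤ (C * (S.sigma0 * (S.alpha * (S.m : ℝ) ^ ((2 : ℝ) / 3)) *
          Real.log ((S.T : ℝ) * S.d * S.N * S.m * S.P / S.delta))) ^ 3 := by gcongr
    _ ≤ 1 := pow_le_one₀ (by have := hL.trans hLd; positivity) hscale

theorem rate_noise (hH : S.CondH C) : C * (S.eta * S.noiseNorm ^ 2 * S.logScale) ≤ 1 := by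
  have hσn := S.hsigman
  have hd : (0 : ℝ) < S.d := by exact_mod_cast S.hd
  have hL := hH.half_le_logScale
  obtain ⟨hC, -, -, -, -, hη, -⟩ := hH
  rw [noiseNorm, mul_pow, sqrt_dim_sq]
  refine mul_le_one_of_le_inv_div (by linarith) (by positivity) (by linarith) (hη.trans ?_)
  unfold logScale at hL ⊢
  gcongr
  exact (min_le_left _ _).trans (min_le_right _ _)

theorem rate_signal (hH : S.CondH C) : C * (S.eta * S.alpha ^ 2 * S.logScale) ≤ 1 := by
  have hα := S.halpha
  have hL := hH.half_le_logScale
  obtain ⟨hC, -, -, -, -, hη, -⟩ := hH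
  refine mul_le_one_of_le_inv_div (by linarith) (by positivity) (by linarith) (hη.trans ?_)
  unfold logScale at hL ⊢
  gcongr
  exact min_le_right _ _

theorem signal (hH : S.CondH C) (hSL : S.SL.Nonempty) :
    (C * (S.noiseNorm * S.logScale)) ^ 3 ≤ S.alpha ^ 3 * S.SL.card := by
  have hν := S.noiseNorm_pos
  have hL := hH.half_le_logScale
  have hn : (0 : ℝ) < S.SL.card := by exact_mod_cast hSL.card_pos
  obtain ⟨hC, -, -, hsig, -⟩ := hH
  rw [N_mul_one_sub_pun, div_le_iff₀ (by positivity)] at hsig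
  calc (C * (S.noiseNorm * S.logScale)) ^ 3 ≤ (S.alpha * (S.SL.card : ℝ) ^ ((1 : ℝ) / 3)) ^ 3 := by
        refine pow_le_pow_left₀ (by positivity) (le_of_eq_of_le ?_ hsig) 3
        rw [noiseNorm, logScale]
        ring
    _ = S.alpha ^ 3 * S.SL.card := by
      rw [mul_pow]
      congr 1
      simpa using rpow_div_three_pow_three hn.le 1

theorem dim (hH : S.CondH C) (hC : 10 ^ 6 ≤ C) :
    10 ^ 3 * (S.m * S.P * S.N * S.logScale ^ 2) ≤ Real.sqrt S.d := by
  obtain ⟨-, -, hdim, -⟩ := hH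
  refine Real.le_sqrt_of_sq_le (le_trans ?_ hdim)
  calc (10 ^ 3 * (S.m * S.P * S.N * S.logScale ^ 2)) ^ 2
      = 10 ^ 6 * S.m ^ 2 * S.P ^ 2 * S.N ^ 2 * S.logScale ^ 4 := by ring
    _ ≤ C * S.m ^ 2 * S.P ^ 2 * S.N ^ 2 * S.logScale ^ 4 := by
      gcongr

theorem sqrt_dim_le_T (hH : S.CondH C) (hC : 2 ≤ C) : Real.sqrt S.d ≤ S.T := by
  have hη := S.heta
  have hσ := S.hsigma0
  have hσn := S.hsigman
  have hν := S.noiseNorm_pos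
  have hN := S.one_le_N
  have hL := hH.half_le_logScale
  have hd : (0 : ℝ) < S.d := by exact_mod_cast S.hd
  have hCL : 1 ≤ C * S.logScale := by nlinarith
  have hrate : S.eta * S.noiseNorm ^ 2 ≤ 1 := by
    calc S.eta * S.noiseNorm ^ 2 ≤ S.eta * S.noiseNorm ^ 2 * (C * S.logScale) :=
          le_mul_of_one_le_right (by positivity) hCL
      _ ≤ 1 := by linarith [hH.rate_noise]
  have hinit : S.sigma0 * S.noiseNorm * Real.sqrt S.d ≤ 1 := by
    calc S.sigma0 * S.noiseNorm * Real.sqrt S.d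
        ≤ S.sigma0 * S.noiseNorm * Real.sqrt S.d * (S.m ^ 2 * (C * S.logScale)) :=
          le_mul_of_one_le_right (by positivity)
            (one_le_mul_of_one_le_of_one_le (one_le_pow₀ S.one_le_m) hCL)
      _ ≤ 1 := by linarith [hH.init_noise]
  obtain ⟨-, hT, -⟩ := hH
  rw [div_le_iff₀ (by positivity)] at hT
  calc Real.sqrt S.d ≤ C * S.N * Real.sqrt S.d :=
        le_mul_of_one_le_left (by positivity)
          (one_le_mul_of_one_le_of_one_le (by linarith) hN)
    _ ≤ S.T * (S.eta * S.sigma0 * S.sigman ^ 3 * (S.d * Real.sqrt S.d)) * Real.sqrt S.d := by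
      gcongr
    _ = S.T * ((S.eta * S.noiseNorm ^ 2) * (S.sigma0 * S.noiseNorm * Real.sqrt S.d)) := by
      rw [noiseNorm]
      linear_combination
        -(S.T * S.eta * S.sigma0 * S.sigman ^ 3 * Real.sqrt S.d ^ 2) * S.sqrt_dim_sq
    _ ≤ S.T * (1 * 1) := by gcongr
    _ = S.T := by ring

theorem three_le_m (hH : S.CondH C) (hC : 6 ≤ C) : (3 : ℝ) ≤ S.m := by
  have hlog : 1 / 2 ≤ Real.log (S.N * S.P / S.delta) := by
    calc (1 : ℝ) / 2 ≤ Real.log 2 := by linarith [Real.log_two_gt_d9]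
      _ ≤ Real.log (S.N * S.P / S.delta) := by
        refine Real.log_le_log two_pos ?_
        rw [le_div_iff₀ S.hdelta0]
        calc 2 * S.delta ≤ 1 * 2 := by linarith [S.hdelta1]
          _ ≤ S.N * S.P := by
            gcongr
            · exact S.one_le_N
            · exact hH.two_le_P
  obtain ⟨-, -, -, -, -, -, -, -, hm, -⟩ := hH
  nlinarith

theorem ten_mul_eps_le (hH : S.CondH C) (hC : 10 ≤ C) : 10 * S.eps ≤ S.alpha := by
  obtain ⟨-, -, -, -, -, -, -, heps, -⟩ := hH
  have hε : S.eps ≤ C⁻¹ * S.alpha :=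
    heps.le.trans (mul_le_mul_of_nonneg_left (min_le_left _ _) (by positivity))
  rw [inv_mul_eq_div, le_div_iff₀ (by linarith)] at hε
  nlinarith [S.heps]

theorem card_SU_mul_P_le (hH : S.CondH C) (hsparse : S.SU.Nonempty → S.SparseRegime C) :
    (S.SU.card : ℝ) * S.P ≤ Real.log S.d := by
  obtain ⟨hC, -, -, -, -, -, -, -, -, -, -, hP⟩ := hH
  rcases S.SU.eq_empty_or_nonempty with hSU | hSU
  · simpa [hSU] using Real.log_natCast_nonneg S.d
  · obtain ⟨-, hpun, -⟩ := hsparse hSU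
    rw [pun, div_le_div_iff_of_pos_right (by linarith [S.one_le_N]), inv_mul_eq_div,
      le_div_iff₀ (by linarith)] at hpun
    exact (mul_le_mul_of_nonneg_left hP (Nat.cast_nonneg _)).trans hpun

theorem noiseRegime (hH : S.CondH C) (hC : 10 ^ 6 ≤ C)
    (hsparse : S.SU.Nonempty → S.SparseRegime C) (hSL : S.SL.Nonempty) : S.NoiseRegime := by
  have hσ := S.hsigma0
  have hν := S.noiseNorm_pos
  have hα := S.halpha
  have hη := S.heta
  have hL := hH.half_le_logScale
  have hC3 : 10 ^ 3 ≤ C := by linarith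
  exact
    { sqrt_dim_le_T := hH.sqrt_dim_le_T (by linarith)
      dim := hH.dim hC
      signal := le_trans (by gcongr) (hH.signal hSL)
      init_noise := le_trans (by gcongr) hH.init_noise
      init_signal := le_trans (by gcongr) hH.init_signal
      rate_noise := le_trans (by gcongr) hH.rate_noise
      rate_signal := le_trans (by gcongr) hH.rate_signal
      ten_mul_eps_le := hH.ten_mul_eps_le (by linarith)
      three_le_m := hH.three_le_m (by linarith)
      two_le_P := hH.two_le_P
      card_SU_mul_P_le := hH.card_SU_mul_P_le hsparse }

theorem succ_T_le_sq (hH : S.CondH C) (hC : 10 ^ 6 ≤ C) : S.T + 1 ≤ S.T ^ 2 := by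
  have hL := hH.half_le_logScale
  have hT : (2 : ℝ) ≤ S.T := by
    calc (2 : ℝ) ≤ 10 ^ 3 * (1 * 1 * 1 * (1 / 2) ^ 2) := by norm_num
      _ ≤ 10 ^ 3 * (S.m * S.P * S.N * S.logScale ^ 2) := by
        gcongr
        · exact S.one_le_m
        · exact S.one_le_P
        · exact S.one_le_N
      _ ≤ S.T := (hH.dim hC).trans (hH.sqrt_dim_le_T (by linarith))
  have hT' : 2 ≤ S.T := by exact_mod_cast hT
  nlinarith

end CondH

/-- The consequences of the event `E` for the noise correlations, in terms of the scales above. -/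
structure Concentration (S : Setting) : Prop where
  le_sqnorm : ∀ i j, j ≠ S.sig i → S.noiseNorm ^ 2 / 2 ≤ sqnorm (S.x i j)
  sqnorm_le : ∀ i j, j ≠ S.sig i → sqnorm (S.x i j) ≤ 3 / 2 * S.noiseNorm ^ 2
  cross : ∀ i k j q, j ≠ S.sig i → q ≠ S.sig k → (i, j) ≠ (k, q) →
    |dot (S.x i j) (S.x k q)| ≤ S.crossBound
  init_signal : ∀ r, |S.wsig 0 r| ≤ S.initSignalBound
  init_noise : ∀ r i j, j ≠ S.sig i → |dot (S.w 0 r) (S.x i j)| ≤ S.initBound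
  exists_aligned : ∃ r, S.sigma0 / 2 ≤ S.wsig 0 r

theorem EventE.concentration {S : Setting} (hE : S.EventE) : S.Concentration := by
  obtain ⟨hnorm, hcross, -, -, hsig, hinit, halign, -⟩ := hE
  have hν : S.noiseNorm ^ 2 = S.sigman ^ 2 * S.d := by rw [noiseNorm, mul_pow, sqrt_dim_sq]
  simp only [dot_e1] at hsig halign
  refine ⟨fun i j hj => ?_, fun i j hj => ?_, fun i k j q hj hq hne => ?_, hsig,
    fun r i j hj => ?_, halign⟩
  · rw [hν]
    exact (hnorm i j hj).1
  · rw [hν]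
    linarith [(hnorm i j hj).2]
  · refine (hcross i k j q hj hq hne).trans_eq ?_
    rw [crossBound, logCross, Real.sqrt_mul (Nat.cast_nonneg _), noiseNorm]
    field_simp
  · refine (hinit r i j hj).trans_eq ?_
    rw [initBound, logInit, Real.sqrt_mul (Nat.cast_nonneg _), noiseNorm]
    ring

section Margins

variable (S : Setting)

/-- The signed strength `y_i ⟨x̃_i, u⟩` of a perturbed learnable signal patch. -/
def strength (t : ℕ) (i : Fin S.N) : ℝ := S.y i * dot (S.xadv t i (S.sig i)) (e1 S.d S.hd)

/-- The signed correlation `y_i ⟨w_r, x_{i,j}⟩` of a neuron with a noise patch. -/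
def noiseCorr (t : ℕ) (r : Fin S.m) (i : Fin S.N) (j : Fin S.P) : ℝ :=
  S.y i * dot (S.w t r) (S.x i j)

/-- The pairs of a neuron and a noise patch of the sample `i`. -/
def noiseIdx (i : Fin S.N) : Finset (Fin S.m × Fin S.P) := univ ×ˢ univ.erase (S.sig i)

/-- The contribution of the signal patch to the margin of a learnable sample. -/
def sigMarg (t : ℕ) (i : Fin S.N) : ℝ := ∑ r, (S.wsig t r * S.strength t i) ^ 3

/-- The contribution of the noise patches to the margin of a sample. -/
def noiseMarg (t : ℕ) (i : Fin S.N) : ℝ := ∑ p ∈ S.noiseIdx i, S.noiseCorr t p.1 i p.2 ^ 3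

variable {S}

theorem mem_noiseIdx {i : Fin S.N} {p : Fin S.m × Fin S.P} :
    p ∈ S.noiseIdx i ↔ p.2 ≠ S.sig i := by
  simp [noiseIdx]

theorem card_noiseIdx_le (i : Fin S.N) : ((S.noiseIdx i).card : ℝ) ≤ S.m * S.P := by
  have h := card_le_univ (S.noiseIdx i)
  rw [Fintype.card_prod, Fintype.card_fin, Fintype.card_fin] at h
  exact_mod_cast h

theorem abs_noiseCorr (t : ℕ) (r : Fin S.m) (i : Fin S.N) (j : Fin S.P) :
    |S.noiseCorr t r i j| = |dot (S.w t r) (S.x i j)| :=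
  S.abs_y_mul i _

theorem noiseCorr_sq (t : ℕ) (r : Fin S.m) (i : Fin S.N) (j : Fin S.P) :
    S.noiseCorr t r i j ^ 2 = dot (S.w t r) (S.x i j) ^ 2 := by
  rw [← sq_abs, abs_noiseCorr, sq_abs]

theorem strength_le {i : Fin S.N} (hi : i ∈ S.SL) (t : ℕ) : S.strength t i ≤ S.alpha :=
  (S.hadvlearn t i hi).2

theorem le_strength {i : Fin S.N} (hi : i ∈ S.SL) (t : ℕ) : S.alpha - S.eps ≤ S.strength t i :=
  (S.hadvlearn t i hi).1

theorem strength_pos {i : Fin S.N} (hi : i ∈ S.SL) (t : ℕ) : 0 < S.strength t i :=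
  (sub_pos.mpr S.hepsalpha).trans_le (le_strength hi t)

theorem xadv_sig_of_mem_SL {i : Fin S.N} (hi : i ∈ S.SL) (t : ℕ) :
    S.xadv t i (S.sig i) = (S.y i * S.strength t i) • e1 S.d S.hd := by
  obtain ⟨c, hc⟩ := S.hadvspan t i
  have hspan : S.xadv t i (S.sig i) = ((1 + c) * (S.alpha * S.y i)) • e1 S.d S.hd := by
    rw [sub_eq_iff_eq_add.mp hc, S.hsigL i hi]
    module
  rw [strength, ← mul_assoc, y_mul_self, one_mul, hspan, dot_smul_left, dot_e1_e1, mul_one]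

theorem xadv_sig_of_mem_SU {i : Fin S.N} (hi : i ∈ S.SU) (t : ℕ) :
    ∃ c : ℝ, S.xadv t i (S.sig i) = c • eLast S.d S.hd := by
  obtain ⟨c, hc⟩ := S.hadvspan t i
  refine ⟨(1 + c) * (S.alpha * S.y i), ?_⟩
  rw [sub_eq_iff_eq_add.mp hc, S.hsigU i hi]
  module

theorem dot_xadv_sig_noise (t : ℕ) (k : Fin S.N) {i : Fin S.N} {j : Fin S.P} (hj : j ≠ S.sig i) :
    dot (S.xadv t k (S.sig k)) (S.x i j) = 0 := by
  rcases S.mem_SL_or_mem_SU k with hk | hk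
  · rw [xadv_sig_of_mem_SL hk, dot_smul_left, dot_comm, S.hnoiseU i j hj, mul_zero]
  · obtain ⟨c, hc⟩ := xadv_sig_of_mem_SU hk t
    rw [hc, dot_smul_left, dot_comm, S.hnoiseV i j hj, mul_zero]

theorem dot_w_xadv_sig_of_mem_SL {i : Fin S.N} (hi : i ∈ S.SL) (t : ℕ) (r : Fin S.m) :
    dot (S.w t r) (S.xadv t i (S.sig i)) = S.y i * (S.wsig t r * S.strength t i) := by
  rw [xadv_sig_of_mem_SL hi, dot_smul_right, dot_e1, wsig]
  ring

theorem dot_w_xadv_sig_of_mem_SU {i : Fin S.N} (hi : i ∈ S.SU) (t : ℕ) (r : Fin S.m) :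
    dot (S.w t r) (S.xadv t i (S.sig i)) = 0 := by
  obtain ⟨c, hc⟩ := xadv_sig_of_mem_SU hi t
  rw [hc, dot_smul_right, S.hwperp, mul_zero]

theorem marg_eq (t : ℕ) (i : Fin S.N) :
    S.marg t i =
      ∑ r, (S.y i * dot (S.w t r) (S.xadv t i (S.sig i))) ^ 3 + S.noiseMarg t i := by
  unfold marg netOut noiseMarg noiseIdx
  rw [sum_product, mul_sum, ← sum_add_distrib]
  refine sum_congr rfl fun r _ => ?_
  rw [mul_sum, ← add_sum_erase _ _ (mem_univ (S.sig i)), phi_sub_phi_neg, y_mul_cube]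
  congr 1
  refine sum_congr rfl fun p hp => ?_
  rw [phi_sub_phi_neg, y_mul_cube, S.hadvnoise t i p (ne_of_mem_erase hp), noiseCorr]

theorem marg_of_mem_SL {i : Fin S.N} (hi : i ∈ S.SL) (t : ℕ) :
    S.marg t i = S.sigMarg t i + S.noiseMarg t i := by
  simp only [marg_eq, sigMarg, dot_w_xadv_sig_of_mem_SL hi, ← mul_assoc, y_mul_self, one_mul]

theorem marg_of_mem_SU {i : Fin S.N} (hi : i ∈ S.SU) (t : ℕ) :
    S.marg t i = S.noiseMarg t i := by
  simp [marg_eq, dot_w_xadv_sig_of_mem_SU hi]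

theorem neg_half_le_noiseMarg {t : ℕ} {i : Fin S.N} {V : ℝ} (hV : 0 ≤ V)
    (hcube : S.m * S.P * V ^ 3 ≤ 1 / 2) (h : ∀ r j, j ≠ S.sig i → -V ≤ S.noiseCorr t r i j) :
    -(1 / 2) ≤ S.noiseMarg t i := by
  have hcard : (S.noiseIdx i).card * V ^ 3 ≤ S.m * S.P * V ^ 3 := by
    gcongr
    exact card_noiseIdx_le i
  exact (by linarith : -(1 / 2) ≤ -((S.noiseIdx i).card * V ^ 3)).trans
    (neg_card_mul_le_sum_cube fun p hp => h p.1 p.2 (mem_noiseIdx.mp hp))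

theorem noiseMarg_le_half {t : ℕ} {i : Fin S.N} {V : ℝ} (hV : 0 ≤ V)
    (hcube : S.m * S.P * V ^ 3 ≤ 1 / 2) (h : ∀ r j, j ≠ S.sig i → S.noiseCorr t r i j ≤ V) :
    S.noiseMarg t i ≤ 1 / 2 := by
  have hcard : (S.noiseIdx i).card * V ^ 3 ≤ S.m * S.P * V ^ 3 := by
    gcongr
    exact card_noiseIdx_le i
  exact (sum_cube_le_card_mul fun p hp => h p.1 p.2 (mem_noiseIdx.mp hp)).trans
    (hcard.trans hcube)

theorem cube_sub_half_le_noiseMarg {t : ℕ} {i : Fin S.N} {V : ℝ} (hV : 0 ≤ V)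
    (hcube : S.m * S.P * V ^ 3 ≤ 1 / 2) (h : ∀ r j, j ≠ S.sig i → -V ≤ S.noiseCorr t r i j)
    (r : Fin S.m) {j : Fin S.P} (hj : j ≠ S.sig i) :
    S.noiseCorr t r i j ^ 3 - 1 / 2 ≤ S.noiseMarg t i := by
  have hcard : (S.noiseIdx i).card * V ^ 3 ≤ S.m * S.P * V ^ 3 := by
    gcongr
    exact card_noiseIdx_le i
  have hsum := cube_sub_card_mul_le_sum_cube (s := S.noiseIdx i)
    (a := fun p => S.noiseCorr t p.1 i p.2) hV
    (fun p hp => h p.1 p.2 (mem_noiseIdx.mp hp)) (k := (r, j)) (mem_noiseIdx.mpr hj)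
  unfold noiseMarg
  linarith

end Margins

section Dynamics

variable (S : Setting)

/-- The direction of the gradient of `y_i f_W(X̃_i)` with respect to the weight `w_r`. -/
def grad (t : ℕ) (r : Fin S.m) (i : Fin S.N) : Fin S.d → ℝ :=
  ∑ p : Fin S.P, (dot (S.w t r) (S.xadv t i p)) ^ 2 • S.xadv t i p

/-- All noise patches of the training set. -/
def noisePatches : Finset (Fin S.N × Fin S.P) := univ.filter fun p => p.2 ≠ S.sig p.1

variable {S}

theorem mem_noisePatches {p : Fin S.N × Fin S.P} : p ∈ S.noisePatches ↔ p.2 ≠ S.sig p.1 := by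
  simp [noisePatches]

theorem sum_noisePatches (f : Fin S.N × Fin S.P → ℝ) :
    ∑ p ∈ S.noisePatches, f p = ∑ i, ∑ j ∈ univ.erase (S.sig i), f (i, j) :=
  sum_finset_product _ _ _ fun p => by simp [noisePatches]

theorem dot_w_succ (hdyn : S.ATDyn) (t : ℕ) (r : Fin S.m) (c : Fin S.d → ℝ) :
    dot (S.w (t + 1) r) c = dot (S.w t r) c +
      S.stepSize * ∑ i, psi (S.marg t i) * (S.y i * dot (S.grad t r i) c) := by
  simp only [hdyn t r, dot_add_left, dot_smul_left, dot_sum_left, stepSize, grad, mul_assoc]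

theorem dot_grad (t : ℕ) (r : Fin S.m) (i : Fin S.N) (c : Fin S.d → ℝ) :
    dot (S.grad t r i) c =
      dot (S.w t r) (S.xadv t i (S.sig i)) ^ 2 * dot (S.xadv t i (S.sig i)) c +
        ∑ j ∈ univ.erase (S.sig i), S.noiseCorr t r i j ^ 2 * dot (S.x i j) c := by
  rw [grad, dot_sum_left, ← add_sum_erase _ _ (mem_univ (S.sig i)), dot_smul_left]
  congr 1
  refine sum_congr rfl fun j hj => ?_
  rw [dot_smul_left, S.hadvnoise t i j (ne_of_mem_erase hj), noiseCorr_sq]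

theorem dot_grad_noise (t : ℕ) (r : Fin S.m) (k : Fin S.N) {i : Fin S.N} {j : Fin S.P}
    (hj : j ≠ S.sig i) :
    dot (S.grad t r k) (S.x i j) =
      ∑ q ∈ univ.erase (S.sig k), S.noiseCorr t r k q ^ 2 * dot (S.x k q) (S.x i j) := by
  rw [dot_grad, dot_xadv_sig_noise t k hj, mul_zero, zero_add]

theorem dot_grad_e1 (t : ℕ) (r : Fin S.m) (i : Fin S.N) :
    dot (S.grad t r i) (e1 S.d S.hd) = dot (S.w t r) (S.xadv t i (S.sig i)) ^ 2 *
      dot (S.xadv t i (S.sig i)) (e1 S.d S.hd) := by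
  rw [dot_grad, add_eq_left]
  refine sum_eq_zero fun j hj => ?_
  rw [S.hnoiseU i j (ne_of_mem_erase hj), mul_zero]

theorem y_mul_dot_grad_e1_of_mem_SL {i : Fin S.N} (hi : i ∈ S.SL) (t : ℕ) (r : Fin S.m) :
    S.y i * dot (S.grad t r i) (e1 S.d S.hd) = S.strength t i ^ 3 * S.wsig t r ^ 2 := by
  calc S.y i * dot (S.grad t r i) (e1 S.d S.hd)
      = dot (S.w t r) (S.xadv t i (S.sig i)) ^ 2 * S.strength t i := by
        rw [dot_grad_e1, strength]; ring
    _ = S.y i * S.y i * (S.strength t i ^ 3 * S.wsig t r ^ 2) := by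
      rw [dot_w_xadv_sig_of_mem_SL hi]; ring
    _ = S.strength t i ^ 3 * S.wsig t r ^ 2 := by rw [y_mul_self, one_mul]

theorem dot_grad_e1_of_mem_SU {i : Fin S.N} (hi : i ∈ S.SU) (t : ℕ) (r : Fin S.m) :
    dot (S.grad t r i) (e1 S.d S.hd) = 0 := by
  rw [dot_grad_e1, dot_w_xadv_sig_of_mem_SU hi]
  ring

theorem wsig_succ (hdyn : S.ATDyn) (t : ℕ) (r : Fin S.m) :
    S.wsig (t + 1) r = S.wsig t r +
      S.stepSize * (∑ i ∈ S.SL, psi (S.marg t i) * S.strength t i ^ 3) * S.wsig t r ^ 2 := by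
  have hSL : ∀ i ∈ S.SL, psi (S.marg t i) * (S.y i * dot (S.grad t r i) (e1 S.d S.hd)) =
      psi (S.marg t i) * S.strength t i ^ 3 * S.wsig t r ^ 2 := fun i hi => by
    rw [y_mul_dot_grad_e1_of_mem_SL hi, mul_assoc]
  have hSU : ∀ i ∈ S.SU, psi (S.marg t i) * (S.y i * dot (S.grad t r i) (e1 S.d S.hd)) = 0 :=
    fun i hi => by rw [dot_grad_e1_of_mem_SU hi, mul_zero, mul_zero]
  have hstep := dot_w_succ hdyn t r (e1 S.d S.hd)
  rw [dot_e1, dot_e1, ← S.hunion, sum_union S.hdisj, sum_congr rfl hSL, sum_congr rfl hSU,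
    sum_const_zero, add_zero, ← sum_mul, ← mul_assoc] at hstep
  exact hstep

theorem wsig_mono (hdyn : S.ATDyn) (r : Fin S.m) : Monotone fun t => S.wsig t r := by
  refine monotone_nat_of_le_succ fun t => ?_
  rw [wsig_succ hdyn]
  have hsum : 0 ≤ ∑ i ∈ S.SL, psi (S.marg t i) * S.strength t i ^ 3 := sum_nonneg fun i hi =>
    mul_nonneg (psi_pos _).le (pow_nonneg (strength_pos hi t).le 3)
  have := S.stepSize_pos
  exact le_add_of_nonneg_right (by positivity)

theorem rho_succ (i : Fin S.N) (j : Fin S.P) (r : Fin S.m) (t : ℕ) :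
    S.rho i j r (t + 1) =
      S.rho i j r t + S.stepSize * psi (S.marg t i) * S.noiseCorr t r i j ^ 2 := by
  rw [noiseCorr_sq]
  rfl

theorem rho_mono (i : Fin S.N) (j : Fin S.P) (r : Fin S.m) : Monotone (S.rho i j r) := by
  refine monotone_nat_of_le_succ fun t => ?_
  rw [rho_succ]
  have := S.stepSize_pos
  have := psi_pos (S.marg t i)
  exact le_add_of_nonneg_right (by positivity)

theorem rho_nonneg (i : Fin S.N) (j : Fin S.P) (r : Fin S.m) (t : ℕ) : 0 ≤ S.rho i j r t :=
  S.rho_mono i j r (Nat.zero_le t)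

theorem rho_le_rhoMaxSU (t : ℕ) (r : Fin S.m) {k : Fin S.N} (hk : k ∈ S.SU) {q : Fin S.P}
    (hq : q ≠ S.sig k) : S.rho k q r t ≤ S.rhoMaxSU t := by
  refine le_csSup (Set.Finite.bddAbove ?_) ⟨r, k, hk, q, hq, rfl⟩
  refine (Set.finite_range fun p : Fin S.m × Fin S.N × Fin S.P =>
    S.rho p.2.1 p.2.2 p.1 t).subset ?_
  rintro z ⟨r, k, -, q, -, rfl⟩
  exact ⟨(r, k, q), rfl⟩

theorem rhoMaxSU_nonneg (t : ℕ) : 0 ≤ S.rhoMaxSU t := by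
  refine Real.sSup_nonneg ?_
  rintro z ⟨r, k, -, q, -, rfl⟩
  exact rho_nonneg k q r t

theorem rhoMaxSU_le {t : ℕ} {B : ℝ} (hB : 0 ≤ B)
    (h : ∀ r, ∀ k ∈ S.SU, ∀ q, q ≠ S.sig k → S.rho k q r t ≤ B) : S.rhoMaxSU t ≤ B := by
  refine Real.sSup_le ?_ hB
  rintro z ⟨r, k, hk, q, hq, rfl⟩
  exact h r k hk q hq

theorem rhoMaxSU_mono : Monotone S.rhoMaxSU := fun _ t' ht =>
  rhoMaxSU_le (rhoMaxSU_nonneg t') fun r k hk q hq =>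
    (rho_mono k q r ht).trans (rho_le_rhoMaxSU t' r hk hq)

theorem dot_w_noise_eq (hdyn : S.ATDyn) (r : Fin S.m) {i : Fin S.N} {j : Fin S.P}
    (hj : j ≠ S.sig i) (t : ℕ) :
    dot (S.w t r) (S.x i j) = dot (S.w 0 r) (S.x i j) +
      ∑ p ∈ S.noisePatches, S.y p.1 * S.rho p.1 p.2 r t * dot (S.x p.1 p.2) (S.x i j) := by
  induction t with
  | zero => simp [rho]
  | succ t ih =>
    rw [dot_w_succ hdyn, ih, add_assoc, sum_noisePatches, sum_noisePatches, mul_sum,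
      ← sum_add_distrib]
    congr 1
    refine sum_congr rfl fun k _ => ?_
    rw [dot_grad_noise t r k hj, mul_sum, mul_sum, mul_sum, ← sum_add_distrib]
    refine sum_congr rfl fun q _ => ?_
    rw [rho_succ]
    ring

end Dynamics

theorem Concentration.rho_mul_sqnorm_bounds {S : Setting} (hc : S.Concentration) (t : ℕ)
    (r : Fin S.m) {i : Fin S.N} {j : Fin S.P} (hj : j ≠ S.sig i) :
    S.noiseNorm ^ 2 * S.rho i j r t / 2 ≤ S.rho i j r t * sqnorm (S.x i j) ∧
      S.rho i j r t * sqnorm (S.x i j) ≤ 3 / 2 * (S.noiseNorm ^ 2 * S.rho i j r t) := by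
  have hlow := mul_le_mul_of_nonneg_left (hc.le_sqnorm i j hj) (rho_nonneg i j r t)
  have hup := mul_le_mul_of_nonneg_left (hc.sqnorm_le i j hj) (rho_nonneg i j r t)
  constructor <;> linarith

section Deviation

variable {S : Setting}

theorem abs_noiseCorr_sub_le (hdyn : S.ATDyn) (hc : S.Concentration) (t : ℕ) (r : Fin S.m)
    {i : Fin S.N} {j : Fin S.P} (hj : j ≠ S.sig i) :
    |S.noiseCorr t r i j - S.rho i j r t * sqnorm (S.x i j)| ≤
      S.initBound + S.crossBound * ∑ p ∈ S.noisePatches, S.rho p.1 p.2 r t := by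
  have hmem : (i, j) ∈ S.noisePatches := mem_noisePatches.mpr hj
  have hrest : |∑ p ∈ S.noisePatches.erase (i, j),
      S.y p.1 * S.rho p.1 p.2 r t * dot (S.x p.1 p.2) (S.x i j)| ≤
        S.crossBound * ∑ p ∈ S.noisePatches, S.rho p.1 p.2 r t := by
    calc |∑ p ∈ S.noisePatches.erase (i, j),
          S.y p.1 * S.rho p.1 p.2 r t * dot (S.x p.1 p.2) (S.x i j)|
        ≤ ∑ p ∈ S.noisePatches.erase (i, j),
            |S.y p.1 * S.rho p.1 p.2 r t * dot (S.x p.1 p.2) (S.x i j)| := abs_sum_le_sum_abs _ _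
      _ ≤ ∑ p ∈ S.noisePatches.erase (i, j), S.crossBound * S.rho p.1 p.2 r t := by
        refine sum_le_sum fun p hp => ?_
        obtain ⟨hne, hp⟩ := mem_erase.mp hp
        have hρ := rho_nonneg p.1 p.2 r t
        rw [mul_assoc, abs_y_mul, abs_mul, abs_of_nonneg hρ, mul_comm]
        gcongr
        exact hc.cross _ _ _ _ (mem_noisePatches.mp hp) hj hne
      _ ≤ S.crossBound * ∑ p ∈ S.noisePatches, S.rho p.1 p.2 r t := by
        rw [← mul_sum]
        exact mul_le_mul_of_nonneg_left (sum_le_sum_of_subset_of_nonneg (erase_subset _ _)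
          fun p _ _ => rho_nonneg p.1 p.2 r t) S.crossBound_nonneg
  calc |S.noiseCorr t r i j - S.rho i j r t * sqnorm (S.x i j)|
      = |S.y i * (dot (S.w 0 r) (S.x i j) + ∑ p ∈ S.noisePatches.erase (i, j),
          S.y p.1 * S.rho p.1 p.2 r t * dot (S.x p.1 p.2) (S.x i j))| := by
        rw [noiseCorr, dot_w_noise_eq hdyn r hj, ← add_sum_erase _ _ hmem, sqnorm]
        congr 1
        linear_combination S.rho i j r t * dot (S.x i j) (S.x i j) * S.y_mul_self i
    _ ≤ |dot (S.w 0 r) (S.x i j)| + |∑ p ∈ S.noisePatches.erase (i, j),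
          S.y p.1 * S.rho p.1 p.2 r t * dot (S.x p.1 p.2) (S.x i j)| := by
        rw [abs_y_mul]
        exact abs_add_le _ _
    _ ≤ _ := add_le_add (hc.init_noise r i j hj) hrest

theorem sum_rho_le {t : ℕ} {r : Fin S.m} {BL BU : ℝ} (hBL : 0 ≤ BL) (hBU : 0 ≤ BU)
    (hL : ∀ i ∈ S.SL, ∀ j, j ≠ S.sig i → S.rho i j r t ≤ BL)
    (hU : ∀ i ∈ S.SU, ∀ j, j ≠ S.sig i → S.rho i j r t ≤ BU) :
    ∑ p ∈ S.noisePatches, S.rho p.1 p.2 r t ≤ S.P * (S.SL.card * BL + S.SU.card * BU) := by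
  have hsample : ∀ i, ∀ B : ℝ, 0 ≤ B → (∀ j, j ≠ S.sig i → S.rho i j r t ≤ B) →
      ∑ j ∈ univ.erase (S.sig i), S.rho i j r t ≤ S.P * B := fun i B hB h => by
    have hcard : ((univ.erase (S.sig i)).card : ℝ) ≤ S.P := by
      exact_mod_cast (card_le_univ _).trans_eq (Fintype.card_fin _)
    calc ∑ j ∈ univ.erase (S.sig i), S.rho i j r t ≤ (univ.erase (S.sig i)).card * B := by
          rw [← nsmul_eq_mul]
          exact sum_le_card_nsmul _ _ _ fun j hj => h j (ne_of_mem_erase hj)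
      _ ≤ S.P * B := by gcongr
  calc ∑ p ∈ S.noisePatches, S.rho p.1 p.2 r t
      = ∑ i ∈ S.SL, ∑ j ∈ univ.erase (S.sig i), S.rho i j r t +
          ∑ i ∈ S.SU, ∑ j ∈ univ.erase (S.sig i), S.rho i j r t := by
        rw [sum_noisePatches, ← S.hunion, sum_union S.hdisj]
    _ ≤ ∑ _i ∈ S.SL, S.P * BL + ∑ _i ∈ S.SU, S.P * BU :=
      add_le_add (sum_le_sum fun i hi => hsample i BL hBL (hL i hi))
        (sum_le_sum fun i hi => hsample i BU hBU (hU i hi))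
    _ = S.P * (S.SL.card * BL + S.SU.card * BU) := by
      simp only [sum_const, nsmul_eq_mul]
      ring

theorem abs_noiseCorr_le_of_rho_small (hdyn : S.ATDyn) (hc : S.Concentration)
    (hr : S.NoiseRegime) {t : ℕ} {r : Fin S.m}
    (hsmall : ∀ i j, j ≠ S.sig i → S.rho i j r t ≤ S.baseCoef / 10)
    {i : Fin S.N} {j : Fin S.P} (hj : j ≠ S.sig i) :
    |S.noiseCorr t r i j| ≤ 3 / 2 * S.initBound := by
  have hbase := S.baseCoef_pos
  have hself := hc.rho_mul_sqnorm_bounds t r hj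
  have hρ := mul_le_mul_of_nonneg_left (hsmall i j hj) (sq_nonneg S.noiseNorm)
  have hcross : S.crossBound * ∑ p ∈ S.noisePatches, S.rho p.1 p.2 r t ≤
      S.crossBound * (S.P * (S.SL.card * (S.baseCoef / 10) + S.SU.card * (S.baseCoef / 10))) :=
    mul_le_mul_of_nonneg_left (sum_rho_le (by positivity) (by positivity)
      (fun i _ => hsmall i) (fun i _ => hsmall i)) S.crossBound_nonneg
  rw [← add_mul, card_SL_add_card_SU] at hcross
  have hdev := abs_le.mp (abs_noiseCorr_sub_le hdyn hc t r hj)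
  have hgrow := hr.base_growth_le
  rw [abs_le]
  constructor <;> linarith

end Deviation

/-- The invariant of the dynamics: learnable coefficients obey the claimed bound, and unlearnable
ones stay below their ceiling. -/
structure Controlled (S : Setting) (t : ℕ) : Prop where
  learnable : ∀ r, ∀ i ∈ S.SL, ∀ j, j ≠ S.sig i →
    S.rho i j r t ≤ S.baseCoef + S.quadCoef * S.rhoMaxSU t ^ 2
  ceiling : S.rhoMaxSU t ≤ S.coefCap

namespace Controlled

variable {S : Setting} {t : ℕ}

theorem of_rho_small (hr : S.NoiseRegime)
    (hsmall : ∀ r i j, j ≠ S.sig i → S.rho i j r t ≤ S.baseCoef / 10) : S.Controlled t where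
  learnable r i _ j hj := by
    have hquad := mul_nonneg S.quadCoef_nonneg (sq_nonneg (S.rhoMaxSU t))
    linarith [hsmall r i j hj, S.baseCoef_pos]
  ceiling := by
    refine rhoMaxSU_le S.coefCap_nonneg fun r k _ q hq => (hsmall r k q hq).trans ?_
    have hν := S.noiseNorm_pos
    rw [coefCap, le_div_iff₀ (by positivity)]
    linarith [hr.noiseNorm_sq_mul_baseCoef_le, hr.one_le_satScale]

variable (h : S.Controlled t) (hdyn : S.ATDyn) (hc : S.Concentration) (hr : S.NoiseRegime)

include h hr in
theorem corrBound_cube_le : S.m * S.P * S.corrBound (S.rhoMaxSU t) ^ 3 ≤ 1 / 2 :=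
  hr.corrBound_cube_le (rhoMaxSU_nonneg t) h.ceiling

include h hr in
theorem corrBound_le_one : S.corrBound (S.rhoMaxSU t) ≤ 1 :=
  hr.corrBound_le_one (rhoMaxSU_nonneg t) h.ceiling

include h hdyn hc hr

theorem abs_noiseCorr_sub_le (r : Fin S.m) {i : Fin S.N} {j : Fin S.P} (hj : j ≠ S.sig i) :
    |S.noiseCorr t r i j - S.rho i j r t * sqnorm (S.x i j)| ≤ S.corrBound (S.rhoMaxSU t) -
      3 / 2 * S.noiseNorm ^ 2 * (S.baseCoef + S.quadCoef * S.rhoMaxSU t ^ 2) := by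
  have hM := rhoMaxSU_nonneg (S := S) t
  have hB : 0 ≤ S.baseCoef + S.quadCoef * S.rhoMaxSU t ^ 2 :=
    add_nonneg S.baseCoef_pos.le (mul_nonneg S.quadCoef_nonneg (sq_nonneg _))
  have hK := S.crossBound_nonneg
  have hsum := sum_rho_le hB hM (h.learnable r) fun i hi j hj => rho_le_rhoMaxSU t r hi hj
  have hbase := hr.base_growth_le
  have hquad := hr.quad_growth_le hM h.ceiling
  calc |S.noiseCorr t r i j - S.rho i j r t * sqnorm (S.x i j)|
      ≤ S.initBound + S.crossBound * ∑ p ∈ S.noisePatches, S.rho p.1 p.2 r t :=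
        Setting.abs_noiseCorr_sub_le hdyn hc t r hj
    _ ≤ S.initBound + S.crossBound * (S.P * (S.N *
          (S.baseCoef + S.quadCoef * S.rhoMaxSU t ^ 2) + S.SU.card * S.rhoMaxSU t)) := by
        gcongr
        refine hsum.trans ?_
        gcongr
        exact_mod_cast S.card_SL_le
    _ ≤ _ := by
      rw [corrBound, corrSlope]
      linarith

theorem abs_noiseCorr_le (r : Fin S.m) {i : Fin S.N} (hi : i ∈ S.SL) {j : Fin S.P}
    (hj : j ≠ S.sig i) : |S.noiseCorr t r i j| ≤ S.corrBound (S.rhoMaxSU t) := by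
  have hself := hc.rho_mul_sqnorm_bounds t r hj
  have hρ := mul_le_mul_of_nonneg_left (h.learnable r i hi j hj) (sq_nonneg S.noiseNorm)
  have hdev := abs_le.mp (h.abs_noiseCorr_sub_le hdyn hc hr r hj)
  rw [abs_le]
  constructor <;> linarith

theorem noiseCorr_bounds (r : Fin S.m) {i : Fin S.N} {j : Fin S.P} (hj : j ≠ S.sig i) :
    S.noiseNorm ^ 2 * S.rho i j r t / 2 - S.corrBound (S.rhoMaxSU t) ≤ S.noiseCorr t r i j ∧
      S.noiseCorr t r i j ≤
        3 / 2 * (S.noiseNorm ^ 2 * S.rho i j r t) + S.corrBound (S.rhoMaxSU t) := by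
  have hself := hc.rho_mul_sqnorm_bounds t r hj
  have hslack : 0 ≤ 3 / 2 * S.noiseNorm ^ 2 * (S.baseCoef + S.quadCoef * S.rhoMaxSU t ^ 2) :=
    mul_nonneg (by positivity)
      (add_nonneg S.baseCoef_pos.le (mul_nonneg S.quadCoef_nonneg (sq_nonneg _)))
  have hdev := abs_le.mp (h.abs_noiseCorr_sub_le hdyn hc hr r hj)
  constructor <;> linarith

theorem neg_corrBound_le_noiseCorr (r : Fin S.m) {i : Fin S.N} {j : Fin S.P} (hj : j ≠ S.sig i) :
    -S.corrBound (S.rhoMaxSU t) ≤ S.noiseCorr t r i j := by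
  have hρ := mul_nonneg (sq_nonneg S.noiseNorm) (rho_nonneg i j r t)
  linarith [(h.noiseCorr_bounds hdyn hc hr r hj).1]

theorem neg_half_le_noiseMarg (i : Fin S.N) : -(1 / 2) ≤ S.noiseMarg t i :=
  Setting.neg_half_le_noiseMarg (S.corrBound_nonneg (rhoMaxSU_nonneg t)) (h.corrBound_cube_le hr)
    fun r _ hj => h.neg_corrBound_le_noiseCorr hdyn hc hr r hj

end Controlled

section SignalGrowth

variable {S : Setting} (hdyn : S.ATDyn) (hc : S.Concentration) (hr : S.NoiseRegime) {t : ℕ}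

include hdyn hc hr

theorem cube_sub_half_le_sigMarg {i : Fin S.N} (hi : i ∈ S.SL) (t : ℕ) (r : Fin S.m) :
    (S.wsig t r * S.strength t i) ^ 3 - 1 / 2 ≤ S.sigMarg t i := by
  have hs := strength_pos hi t
  have hV := S.initSignalBound_nonneg
  have hlow : ∀ r' ∈ univ, -(S.alpha * S.initSignalBound) ≤ S.wsig t r' * S.strength t i :=
    fun r' _ => by
      have hw : -S.initSignalBound ≤ S.wsig t r' :=
        (abs_le.mp (hc.init_signal r')).1.trans (wsig_mono hdyn r' (Nat.zero_le t))
      nlinarith [strength_le hi t]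
  have hsum := cube_sub_card_mul_le_sum_cube (mul_nonneg S.halpha.le hV) hlow (mem_univ r)
  rw [card_univ, Fintype.card_fin] at hsum
  rw [sigMarg]
  linarith [hr.initSignalBound_cube_le]

theorem psi_le_of_mem_SL {i : Fin S.N} (hi : i ∈ S.SL) (hnoise : -(1 / 2) ≤ S.noiseMarg t i)
    {r : Fin S.m} (hw : 0 ≤ S.wsig t r) :
    psi (S.marg t i) ≤ 3 * Real.exp (-((S.alpha * S.wsig t r) ^ 3 / 2)) := by
  have hsig : (S.alpha * S.wsig t r) ^ 3 / 2 ≤ (S.wsig t r * S.strength t i) ^ 3 := by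
    calc (S.alpha * S.wsig t r) ^ 3 / 2 = S.wsig t r ^ 3 * (S.alpha ^ 3 / 2) := by ring
      _ ≤ S.wsig t r ^ 3 * S.strength t i ^ 3 := by
        gcongr
        exact hr.half_alpha_cube_le.trans (cube_le_cube (le_strength hi t))
      _ = (S.wsig t r * S.strength t i) ^ 3 := (mul_pow _ _ _).symm
  have hmarg : (S.alpha * S.wsig t r) ^ 3 / 2 - 1 ≤ S.marg t i := by
    rw [marg_of_mem_SL hi]
    linarith [cube_sub_half_le_sigMarg hdyn hc hr hi t r]
  calc psi (S.marg t i) ≤ Real.exp (-S.marg t i) := psi_le_exp_neg _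
    _ ≤ Real.exp (1 + -((S.alpha * S.wsig t r) ^ 3 / 2)) := Real.exp_le_exp.mpr (by linarith)
    _ = Real.exp 1 * Real.exp (-((S.alpha * S.wsig t r) ^ 3 / 2)) := Real.exp_add _ _
    _ ≤ 3 * Real.exp (-((S.alpha * S.wsig t r) ^ 3 / 2)) := by
      gcongr
      linarith [Real.exp_one_lt_d9]

theorem wsig_succ_le (hnoise : ∀ i ∈ S.SL, -(1 / 2) ≤ S.noiseMarg t i) {r : Fin S.m}
    (hw : 0 < S.wsig t r) : S.wsig (t + 1) r ≤ 2 * S.wsig t r := by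
  have hα := S.halpha
  have hη := S.heta
  have hN := S.one_le_N
  have hstep := S.stepSize_pos
  set E := Real.exp (-((S.alpha * S.wsig t r) ^ 3 / 2))
  have hsum : ∑ i ∈ S.SL, psi (S.marg t i) * S.strength t i ^ 3 ≤ S.N * (3 * E * S.alpha ^ 3) := by
    calc ∑ i ∈ S.SL, psi (S.marg t i) * S.strength t i ^ 3
        ≤ S.SL.card * (3 * E * S.alpha ^ 3) := by
          rw [← nsmul_eq_mul]
          refine sum_le_card_nsmul _ _ _ fun i hi => ?_
          have hs := strength_pos hi t
          gcongr
          · exact psi_le_of_mem_SL hdyn hc hr hi (hnoise i hi) hw.le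
          · exact strength_le hi t
      _ ≤ S.N * (3 * E * S.alpha ^ 3) := by gcongr; exact_mod_cast S.card_SL_le
  have hgrow : S.stepSize * (∑ i ∈ S.SL, psi (S.marg t i) * S.strength t i ^ 3) * S.wsig t r ≤ 1 :=
    calc S.stepSize * (∑ i ∈ S.SL, psi (S.marg t i) * S.strength t i ^ 3) * S.wsig t r
        ≤ S.stepSize * (S.N * (3 * E * S.alpha ^ 3)) * S.wsig t r := by gcongr
      _ = 9 * (S.eta * S.alpha ^ 2) * (S.alpha * S.wsig t r * E) := by
        rw [stepSize]; field_simp; ring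
      _ ≤ 9 * (S.eta * S.alpha ^ 2) * 1 := by
        gcongr
        exact mul_exp_neg_cube_half_le_one (by positivity)
      _ ≤ 1 := by linarith [hr.nine_mul_rate_signal_le]
  rw [wsig_succ hdyn]
  nlinarith

theorem stepSize_mul_sum_psi_le (hnoise : ∀ i ∈ S.SL, -(1 / 2) ≤ S.noiseMarg t i) {r : Fin S.m}
    (hw : 0 < S.wsig t r) : S.stepSize * ∑ i ∈ S.SL, psi (S.marg t i) ≤
      4 / S.alpha ^ 3 * ((S.wsig t r)⁻¹ - (S.wsig (t + 1) r)⁻¹) := by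
  have hα := S.halpha
  have hstep := S.stepSize_pos
  have hψ : 0 ≤ ∑ i ∈ S.SL, psi (S.marg t i) := sum_nonneg fun i _ => (psi_pos _).le
  have hlow : S.wsig t r + S.stepSize * (∑ i ∈ S.SL, psi (S.marg t i)) * (S.alpha ^ 3 / 2) *
      S.wsig t r ^ 2 ≤ S.wsig (t + 1) r := by
    rw [wsig_succ hdyn, mul_assoc S.stepSize, sum_mul]
    gcongr with i hi
    · exact (psi_pos _).le
    · exact hr.half_alpha_cube_le.trans (cube_le_cube (le_strength hi t))
  have hdrop := half_le_inv_sub_inv hw (by positivity) hlow (wsig_succ_le hdyn hc hr hnoise hw)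
  calc S.stepSize * ∑ i ∈ S.SL, psi (S.marg t i)
      = 4 / S.alpha ^ 3 *
          (S.stepSize * (∑ i ∈ S.SL, psi (S.marg t i)) * (S.alpha ^ 3 / 2) / 2) := by
        field_simp; ring
    _ ≤ _ := by gcongr

end SignalGrowth

section EarlyPhase

/-- The growth of a noise coefficient per unit drop of `1/w` for a signal weight `w`, as long as no
signal weight has passed the threshold. -/
def earlyRate (S : Setting) : ℝ := 36 / (S.alpha ^ 3 * S.SL.card) * (3 / 2 * S.initBound) ^ 2

variable {S : Setting} {t : ℕ}

theorem earlyRate_mul_le (hr : S.NoiseRegime) {w₀ w : ℝ} (hw₀ : S.sigma0 / 2 ≤ w₀) (hw : 0 < w) :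
    S.earlyRate * (w₀⁻¹ - w⁻¹) ≤ S.baseCoef / 10 := by
  have hσ := S.hsigma0
  have hα := S.halpha
  have hdrop : w₀⁻¹ - w⁻¹ ≤ 2 / S.sigma0 := by
    have hinv : w₀⁻¹ ≤ (S.sigma0 / 2)⁻¹ := inv_anti₀ (by positivity) hw₀
    rw [inv_div] at hinv
    linarith [inv_pos.mpr hw]
  calc S.earlyRate * (w₀⁻¹ - w⁻¹) ≤ S.earlyRate * (2 / S.sigma0) := by
        unfold earlyRate; gcongr
    _ = 72 / (S.alpha ^ 3 * S.SL.card * S.sigma0) * (3 / 2 * S.initBound) ^ 2 := by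
      rw [earlyRate]; ring
    _ ≤ S.baseCoef / 10 := hr.initBound_sq_le_baseCoef_div_ten

theorem sigMarg_le_one (hthr : ∀ r, S.wsig t r ≤ S.signalThreshold) {i : Fin S.N}
    (hi : i ∈ S.SL) : S.sigMarg t i ≤ 1 := by
  have hm := S.one_le_m
  have hα := S.halpha
  have hthr0 := S.signalThreshold_pos
  have hs := strength_pos hi t
  calc S.sigMarg t i ≤ (univ : Finset (Fin S.m)).card * (1 / S.m : ℝ) ^ 3 :=
        sum_cube_le_card_mul fun r _ => by
          calc S.wsig t r * S.strength t i ≤ S.signalThreshold * S.alpha := by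
                gcongr
                · exact hthr r
                · exact strength_le hi t
            _ = 1 / S.m := by rw [signalThreshold]; field_simp
    _ = 1 / (S.m : ℝ) ^ 2 := by rw [card_univ, Fintype.card_fin]; field_simp
    _ ≤ 1 := div_le_one_of_le₀ (one_le_pow₀ hm) (by positivity)

variable (hdyn : S.ATDyn) (hc : S.Concentration) (hr : S.NoiseRegime)

include hdyn hc hr

theorem stepSize_le_of_wsig_le (hthr : ∀ r, S.wsig t r ≤ S.signalThreshold)
    (hcorr : ∀ r i j, j ≠ S.sig i → |S.noiseCorr t r i j| ≤ 3 / 2 * S.initBound)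
    {r : Fin S.m} (hw : 0 < S.wsig t r) : S.stepSize ≤
      36 / (S.alpha ^ 3 * S.SL.card) * ((S.wsig t r)⁻¹ - (S.wsig (t + 1) r)⁻¹) := by
  have hstep := S.stepSize_pos
  have hn := hr.one_le_card_SL
  have hV : 0 ≤ 3 / 2 * S.initBound := by linarith [S.initBound_nonneg]
  have hcube : S.m * S.P * (3 / 2 * S.initBound) ^ 3 ≤ 1 / 2 := by
    simpa [corrBound] using hr.corrBound_cube_le le_rfl S.coefCap_nonneg
  have hψ : ∀ i ∈ S.SL, 1 / 9 ≤ psi (S.marg t i) := fun i hi => by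
    have hnoise := noiseMarg_le_half hV hcube fun r j hj => (abs_le.mp (hcorr r i j hj)).2
    refine one_div_nine_le_psi ?_
    rw [marg_of_mem_SL hi]
    linarith [sigMarg_le_one hthr hi]
  have hsum : S.SL.card * (1 / 9) ≤ ∑ i ∈ S.SL, psi (S.marg t i) := by
    rw [← nsmul_eq_mul]
    exact card_nsmul_le_sum _ _ _ hψ
  have hcost := stepSize_mul_sum_psi_le hdyn hc hr (fun i _ => neg_half_le_noiseMarg hV hcube
    fun r j hj => (abs_le.mp (hcorr r i j hj)).1) hw
  calc S.stepSize = 9 / S.SL.card * (S.stepSize * (S.SL.card * (1 / 9))) := by field_simp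
    _ ≤ 9 / S.SL.card * (4 / S.alpha ^ 3 * ((S.wsig t r)⁻¹ - (S.wsig (t + 1) r)⁻¹)) := by
      refine mul_le_mul_of_nonneg_left ?_ (by positivity)
      exact (mul_le_mul_of_nonneg_left hsum hstep.le).trans hcost
    _ = _ := by ring

theorem rho_succ_le_of_rho_small (hthr : ∀ r, S.wsig t r ≤ S.signalThreshold)
    (hsmall : ∀ r i j, j ≠ S.sig i → S.rho i j r t ≤ S.baseCoef / 10)
    {r' : Fin S.m} (hw : 0 < S.wsig t r') (r : Fin S.m) {i : Fin S.N} {j : Fin S.P}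
    (hj : j ≠ S.sig i) : S.rho i j r (t + 1) ≤
      S.rho i j r t + S.earlyRate * ((S.wsig t r')⁻¹ - (S.wsig (t + 1) r')⁻¹) := by
  have hcorr : ∀ r i j, j ≠ S.sig i → |S.noiseCorr t r i j| ≤ 3 / 2 * S.initBound :=
    fun r i j hj => abs_noiseCorr_le_of_rho_small hdyn hc hr (hsmall r) hj
  have hcost := stepSize_le_of_wsig_le hdyn hc hr hthr hcorr hw
  have hstep := S.stepSize_pos
  calc S.rho i j r (t + 1)
      = S.rho i j r t + S.stepSize * psi (S.marg t i) * |S.noiseCorr t r i j| ^ 2 := by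
        rw [rho_succ, sq_abs]
    _ ≤ S.rho i j r t + S.stepSize * 1 * (3 / 2 * S.initBound) ^ 2 := by
      gcongr
      · exact psi_le_one _
      · exact hcorr r i j hj
    _ ≤ S.rho i j r t + 36 / (S.alpha ^ 3 * S.SL.card) *
          ((S.wsig t r')⁻¹ - (S.wsig (t + 1) r')⁻¹) * (3 / 2 * S.initBound) ^ 2 := by
      rw [mul_one]
      gcongr
    _ = _ := by rw [earlyRate]; ring

theorem rho_le_of_wsig_le (hthr : ∀ s < t, ∀ r, S.wsig s r ≤ S.signalThreshold) (r : Fin S.m)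
    {i : Fin S.N} {j : Fin S.P} (hj : j ≠ S.sig i) : S.rho i j r t ≤ S.baseCoef / 10 := by
  obtain ⟨r', hr'⟩ := hc.exists_aligned
  have hw : ∀ s, 0 < S.wsig s r' := fun s =>
    (half_pos S.hsigma0).trans_le (hr'.trans (wsig_mono hdyn r' (Nat.zero_le s)))
  have hpotential : ∀ s ≤ t, ∀ r i j, j ≠ S.sig i →
      S.rho i j r s ≤ S.earlyRate * ((S.wsig 0 r')⁻¹ - (S.wsig s r')⁻¹) := by
    intro s
    induction s with
    | zero => simp [rho]
    | succ s ih =>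
      intro hs r i j hj
      have hprev := ih (Nat.le_of_succ_le hs)
      have hgrow := rho_succ_le_of_rho_small hdyn hc hr (hthr s hs)
        (fun r i j hj => (hprev r i j hj).trans (earlyRate_mul_le hr hr' (hw s))) (hw s) r hj
      linarith [hprev r i j hj]
  exact (hpotential t le_rfl r i j hj).trans (earlyRate_mul_le hr hr' (hw t))

end EarlyPhase

/-- The bounds that propagate from the iteration `a` at which the neuron `r'` has learned the
signal: learnable coefficients are paid for by the drop of `1/w_{r',1}`, and unlearnable ones hardly
grow once they are saturated. -/
structure LateBounds (S : Setting) (a : ℕ) (r' : Fin S.m) (t : ℕ) : Prop where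
  learnable : ∀ r, ∀ i ∈ S.SL, ∀ j, j ≠ S.sig i → S.rho i j r t ≤ S.baseCoef / 10 +
    4 / S.alpha ^ 3 * ((S.wsig a r')⁻¹ - (S.wsig t r')⁻¹) * S.corrBound (S.rhoMaxSU t) ^ 2
  unlearnable : ∀ r, ∀ k ∈ S.SU, ∀ q, q ≠ S.sig k →
    S.noiseNorm ^ 2 * S.rho k q r t ≤ 9 * S.satScale + t / S.T ^ 2 * S.satScale

namespace LateBounds

variable {S : Setting} {a t : ℕ} {r' : Fin S.m}

theorem of_rho_small (hr : S.NoiseRegime)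
    (hsmall : ∀ r i j, j ≠ S.sig i → S.rho i j r a ≤ S.baseCoef / 10) : S.LateBounds a r' a where
  learnable r i _ j hj := by
    rw [sub_self, mul_zero, zero_mul, add_zero]
    exact hsmall r i j hj
  unlearnable r k _ q hq := by
    have hρ := mul_le_mul_of_nonneg_left (hsmall r k q hq) (sq_nonneg S.noiseNorm)
    have hs := hr.one_le_satScale
    have hextra : 0 ≤ a / (S.T : ℝ) ^ 2 * S.satScale := by positivity
    linarith [hr.noiseNorm_sq_mul_baseCoef_le]

theorem noiseNorm_sq_mul_rho_le (h : S.LateBounds a r' t) (ht : t ≤ S.T ^ 2) (r : Fin S.m)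
    {k : Fin S.N} (hk : k ∈ S.SU) {q : Fin S.P} (hq : q ≠ S.sig k) :
    S.noiseNorm ^ 2 * S.rho k q r t ≤ 10 * S.satScale := by
  have hfrac : (t : ℝ) / S.T ^ 2 ≤ 1 := div_le_one_of_le₀ (by exact_mod_cast ht) (by positivity)
  linarith [h.unlearnable r k hk q hq, mul_le_mul_of_nonneg_right hfrac S.satScale_nonneg]

theorem controlled (h : S.LateBounds a r' t) (hdyn : S.ATDyn) (hr : S.NoiseRegime)
    (hlearned : S.signalThreshold < S.wsig a r') (hat : a ≤ t) (ht : t ≤ S.T ^ 2) :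
    S.Controlled t where
  ceiling := by
    refine rhoMaxSU_le S.coefCap_nonneg fun r k hk q hq => ?_
    rw [coefCap, le_div_iff₀' (pow_pos S.noiseNorm_pos 2)]
    exact h.noiseNorm_sq_mul_rho_le ht r hk hq
  learnable r i hi j hj := by
    have hα := S.halpha
    have hthr := S.signalThreshold_pos
    set M := S.rhoMaxSU t
    have hdrop : (S.wsig a r')⁻¹ - (S.wsig t r')⁻¹ ≤ S.alpha * S.m := by
      have hwt : 0 < S.wsig t r' := hthr.trans (hlearned.trans_le (wsig_mono hdyn r' hat))
      have hwa := inv_anti₀ hthr hlearned.le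
      rw [signalThreshold, one_div, inv_inv] at hwa
      linarith [inv_pos.mpr hwt]
    calc S.rho i j r t
        ≤ S.baseCoef / 10 + 4 / S.alpha ^ 3 * ((S.wsig a r')⁻¹ - (S.wsig t r')⁻¹) *
            S.corrBound M ^ 2 := h.learnable r i hi j hj
      _ ≤ S.baseCoef / 10 + 4 / S.alpha ^ 3 * (S.alpha * S.m) *
            (2 * ((3 / 2 * S.initBound) ^ 2 + (S.corrSlope * M) ^ 2)) := by
        gcongr
        exact add_sq_le
      _ = S.baseCoef / 10 + (18 * S.m / S.alpha ^ 2 * S.initBound ^ 2 +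
            8 * S.m / S.alpha ^ 2 * S.corrSlope ^ 2 * M ^ 2) := by field_simp; ring
      _ ≤ S.baseCoef / 10 + (9 / 10 * S.baseCoef + S.quadCoef * M ^ 2) := by
        refine add_le_add_right (add_le_add hr.initBound_sq_le_baseCoef ?_) _
        exact mul_le_mul_of_nonneg_right hr.corrSlope_sq_le_quadCoef (sq_nonneg M)
      _ = S.baseCoef + S.quadCoef * M ^ 2 := by ring

end LateBounds

section LatePhase

variable {S : Setting} {t : ℕ} (hctl : S.Controlled t) (hdyn : S.ATDyn) (hc : S.Concentration)
  (hr : S.NoiseRegime)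

include hctl hdyn hc hr

theorem rho_succ_le_of_mem_SL {r' : Fin S.m} (hw : 0 < S.wsig t r') (r : Fin S.m) {i : Fin S.N}
    (hi : i ∈ S.SL) {j : Fin S.P} (hj : j ≠ S.sig i) : S.rho i j r (t + 1) ≤ S.rho i j r t +
      4 / S.alpha ^ 3 * ((S.wsig t r')⁻¹ - (S.wsig (t + 1) r')⁻¹) *
        S.corrBound (S.rhoMaxSU t) ^ 2 := by
  have hstep := S.stepSize_pos
  have hψ : S.stepSize * psi (S.marg t i) ≤
      4 / S.alpha ^ 3 * ((S.wsig t r')⁻¹ - (S.wsig (t + 1) r')⁻¹) := by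
    refine le_trans ?_ (stepSize_mul_sum_psi_le hdyn hc hr
      (fun i _ => hctl.neg_half_le_noiseMarg hdyn hc hr i) hw)
    gcongr
    exact single_le_sum (f := fun i => psi (S.marg t i)) (fun i _ => (psi_pos _).le) hi
  rw [rho_succ, ← sq_abs]
  gcongr
  · exact (mul_nonneg hstep.le (psi_pos _).le).trans hψ
  · exact hctl.abs_noiseCorr_le hdyn hc hr r hi hj

theorem psi_le_of_memorized (r : Fin S.m) {k : Fin S.N} (hk : k ∈ S.SU) {q : Fin S.P}
    (hq : q ≠ S.sig k) (hmem : 8 * S.satScale ≤ S.noiseNorm ^ 2 * S.rho k q r t) :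
    psi (S.marg t k) ≤ 1 / (S.T : ℝ) ^ 2 := by
  have hs := hr.one_le_satScale
  have hT : (0 : ℝ) < S.T := by linarith [hr.sixteen_le_T]
  have hcorr : 3 * S.satScale ≤ S.noiseCorr t r k q := by
    linarith [(hctl.noiseCorr_bounds hdyn hc hr r hq).1, hctl.corrBound_le_one hr]
  have hcube : 27 * Real.log S.T ≤ S.noiseCorr t r k q ^ 3 := by
    rw [← satScale_pow_three]
    linarith [cube_le_cube hcorr]
  have hmarg : 2 * Real.log S.T ≤ S.marg t k := by
    rw [marg_of_mem_SU hk]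
    linarith [hr.one_le_log_T, cube_sub_half_le_noiseMarg
      (S.corrBound_nonneg (rhoMaxSU_nonneg t)) (hctl.corrBound_cube_le hr)
      (fun r j hj => hctl.neg_corrBound_le_noiseCorr hdyn hc hr r hj) r hq]
  calc psi (S.marg t k) ≤ Real.exp (-S.marg t k) := psi_le_exp_neg _
    _ ≤ Real.exp (-(2 * Real.log S.T)) := Real.exp_le_exp.mpr (by linarith)
    _ = 1 / (S.T : ℝ) ^ 2 := by
      rw [Real.exp_neg, two_mul, Real.exp_add, Real.exp_log hT, one_div, sq]

theorem noiseNorm_sq_mul_rho_succ_le (r : Fin S.m) {k : Fin S.N} {q : Fin S.P}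
    (hq : q ≠ S.sig k) (hceil : S.noiseNorm ^ 2 * S.rho k q r t ≤ 10 * S.satScale) :
    S.noiseNorm ^ 2 * S.rho k q r (t + 1) ≤
      S.noiseNorm ^ 2 * S.rho k q r t + psi (S.marg t k) * S.satScale := by
  have hη := S.heta
  have hs := hr.one_le_satScale
  have hψ := psi_pos (S.marg t k)
  have hcorr : |S.noiseCorr t r k q| ≤ 16 * S.satScale := by
    have hbounds := hctl.noiseCorr_bounds hdyn hc hr r hq
    have hone := hctl.corrBound_le_one hr
    rw [abs_le]
    constructor <;> linarith
  have hstep : S.stepSize ≤ 3 * S.eta := div_le_self (by positivity) S.one_le_N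
  calc S.noiseNorm ^ 2 * S.rho k q r (t + 1)
      = S.noiseNorm ^ 2 * S.rho k q r t +
          S.noiseNorm ^ 2 * (S.stepSize * psi (S.marg t k) * |S.noiseCorr t r k q| ^ 2) := by
        rw [rho_succ, sq_abs, mul_add]
    _ ≤ S.noiseNorm ^ 2 * S.rho k q r t +
          S.noiseNorm ^ 2 * (3 * S.eta * psi (S.marg t k) * (16 * S.satScale) ^ 2) := by gcongr
    _ = S.noiseNorm ^ 2 * S.rho k q r t +
          768 * (S.eta * S.noiseNorm ^ 2) * S.satScale * (psi (S.marg t k) * S.satScale) := by ring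
    _ ≤ S.noiseNorm ^ 2 * S.rho k q r t + 1 * (psi (S.marg t k) * S.satScale) := by
      gcongr
      exact hr.rate_noise_mul_satScale_le
    _ = _ := by rw [one_mul]

theorem LateBounds.succ {a : ℕ} {r' : Fin S.m} (h : S.LateBounds a r' t)
    (hw : 0 < S.wsig t r') (hwa : S.wsig a r' ≤ S.wsig t r') (ha : 0 < S.wsig a r')
    (ht : t ≤ S.T ^ 2) : S.LateBounds a r' (t + 1) where
  learnable r i hi j hj := by
    have hα := S.halpha
    have hdrop0 : (S.wsig t r')⁻¹ ≤ (S.wsig a r')⁻¹ := inv_anti₀ ha hwa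
    have hdrop1 : (S.wsig (t + 1) r')⁻¹ ≤ (S.wsig t r')⁻¹ :=
      inv_anti₀ hw (wsig_mono hdyn r' t.le_succ)
    have hgrow := rho_succ_le_of_mem_SL hctl hdyn hc hr hw r hi hj
    have hV : S.corrBound (S.rhoMaxSU t) ≤ S.corrBound (S.rhoMaxSU (t + 1)) :=
      S.corrBound_mono (rhoMaxSU_mono t.le_succ)
    have hV0 := S.corrBound_nonneg (rhoMaxSU_nonneg (S := S) t)
    calc S.rho i j r (t + 1)
        ≤ S.baseCoef / 10 + 4 / S.alpha ^ 3 * ((S.wsig a r')⁻¹ - (S.wsig (t + 1) r')⁻¹) *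
            S.corrBound (S.rhoMaxSU t) ^ 2 := by linarith [h.learnable r i hi j hj]
      _ ≤ _ := by
        gcongr
        exact mul_nonneg (by positivity) (by linarith)
  unlearnable r k hk q hq := by
    have hs := hr.one_le_satScale
    have hgrow := noiseNorm_sq_mul_rho_succ_le hctl hdyn hc hr r hq
      (h.noiseNorm_sq_mul_rho_le ht r hk hq)
    have hbound : (↑(t + 1) : ℝ) / S.T ^ 2 * S.satScale =
        t / S.T ^ 2 * S.satScale + 1 / (S.T : ℝ) ^ 2 * S.satScale := by push_cast; ring
    rcases le_total (S.noiseNorm ^ 2 * S.rho k q r t) (8 * S.satScale) with hlow | hmem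
    · have hψ : psi (S.marg t k) * S.satScale ≤ 1 * S.satScale := by
        gcongr
        exact psi_le_one _
      have hextra : 0 ≤ (↑(t + 1) : ℝ) / S.T ^ 2 * S.satScale := by positivity
      linarith
    · have hψ : psi (S.marg t k) * S.satScale ≤ 1 / (S.T : ℝ) ^ 2 * S.satScale := by
        gcongr
        exact psi_le_of_memorized hctl hdyn hc hr r hk hq hmem
      linarith [h.unlearnable r k hk q hq]

end LatePhase

section Stability

variable {S : Setting} (hdyn : S.ATDyn) (hc : S.Concentration) (hr : S.NoiseRegime)

include hdyn hc hr

theorem lateBounds_of_wsig_gt {a : ℕ} {r' : Fin S.m}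
    (hthr : ∀ s < a, ∀ r, S.wsig s r ≤ S.signalThreshold)
    (hlearned : S.signalThreshold < S.wsig a r') {t : ℕ} (hat : a ≤ t) (ht : t ≤ S.T ^ 2) :
    S.LateBounds a r' t := by
  induction t, hat using Nat.le_induction with
  | base => exact .of_rho_small hr fun r i j hj => rho_le_of_wsig_le hdyn hc hr hthr r hj
  | succ t hat ih =>
    have hprev := ih (Nat.le_of_succ_le ht)
    have ha : 0 < S.wsig a r' := S.signalThreshold_pos.trans hlearned
    have hwa : S.wsig a r' ≤ S.wsig t r' := wsig_mono hdyn r' hat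
    exact hprev.succ (hprev.controlled hdyn hr hlearned hat (Nat.le_of_succ_le ht)) hdyn hc hr
      (ha.trans_le hwa) hwa ha (Nat.le_of_succ_le ht)

theorem controlled_of_le_sq {t : ℕ} (ht : t ≤ S.T ^ 2) : S.Controlled t := by
  classical
  by_cases hearly : ∀ s < t, ∀ r, S.wsig s r ≤ S.signalThreshold
  · exact .of_rho_small hr fun r i j hj => rho_le_of_wsig_le hdyn hc hr hearly r hj
  · push Not at hearly
    obtain ⟨s, hst, hs⟩ := hearly
    have hex : ∃ a r, S.signalThreshold < S.wsig a r := ⟨s, hs⟩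
    obtain ⟨r', hlearned⟩ := Nat.find_spec hex
    have hthr : ∀ s < Nat.find hex, ∀ r, S.wsig s r ≤ S.signalThreshold := fun s hs r =>
      not_lt.mp fun hlt => Nat.find_min hex hs ⟨r, hlt⟩
    have hat : Nat.find hex ≤ t := (Nat.find_min' hex hs).trans hst.le
    exact (lateBounds_of_wsig_gt hdyn hc hr hthr hlearned hat ht).controlled hdyn hr hlearned hat ht

end Stability

theorem Controlled.rho_le {S : Setting} {t : ℕ} (h : S.Controlled t) (r : Fin S.m) {i : Fin S.N}
    (hi : i ∈ S.SL) {j : Fin S.P} (hj : j ≠ S.sig i) :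
    S.rho i j r t ≤ S.sigma0 / (S.sigman * Real.sqrt S.d) +
      S.pun * S.N * S.sigman ^ 2 * Real.sqrt S.d / (100 * Real.log S.T ^ ((2 : ℝ) / 3)) *
        S.rhoMaxSU t ^ 2 := by
  rw [← quadCoef_eq]
  exact h.learnable r i hi j hj

theorem Controlled.noiseStability {S : Setting} {t : ℕ} (h : S.Controlled t) (hdyn : S.ATDyn)
    (hc : S.Concentration) (hr : S.NoiseRegime) : S.NS t := by
  intro r i hi j hj
  calc |dot (S.w t r) (S.x i j)| = |S.noiseCorr t r i j| := (abs_noiseCorr t r i j).symm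
    _ ≤ S.corrBound (S.rhoMaxSU t) := h.abs_noiseCorr_le hdyn hc hr r hi hj
    _ ≤ S.corrBound S.coefCap := S.corrBound_mono h.ceiling
    _ = _ := by
      rw [corrBound_coefCap_eq, ← pun_mul_N, Real.sqrt_mul (Nat.cast_nonneg _), noiseNorm,
        logInit, logCross, satScale]
      ring

end Setting

theorem stmt9_general {C : ℝ} (hC : 10 ^ 6 ≤ C) {S : Setting} (hdyn : S.ATDyn) (hE : S.EventE)
    (hH : S.CondH C) (hsparse : S.SU.Nonempty → S.SparseRegime C) {t : ℕ} (ht : t ≤ S.T ^ 2) :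
    (∀ r : Fin S.m, ∀ i ∈ S.SL, ∀ j, j ≠ S.sig i →
      S.rho i j r t ≤
        S.sigma0 / (S.sigman * Real.sqrt S.d) +
          S.pun * S.N * S.sigman ^ 2 * Real.sqrt S.d / (100 * Real.log S.T ^ ((2 : ℝ) / 3)) *
            (S.rhoMaxSU t) ^ 2) ∧
    S.NS t := by
  rcases S.SL.eq_empty_or_nonempty with hSL | hSL
  · simp [Setting.NS, hSL]
  · have hr := hH.noiseRegime hC hsparse hSL
    have hctl := Setting.controlled_of_le_sq hdyn hE.concentration hr ht
    exact ⟨fun r i hi j hj => hctl.rho_le r hi hj, hctl.noiseStability hdyn hE.concentration hr⟩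

/-- Verification of noise stability on learnable samples. On the
event `E`, under Condition (H), at any iteration `t ≤ T+1` the learnable noise
coefficients are controlled in terms of the maximal unlearnable noise coefficient,
and consequently the noise-stability bound (NS) holds at `t`. -/
theorem stmt9 :
    ∃ C : ℝ, 0 < C ∧
      ∀ S : Setting, S.ATDyn → S.EventE → S.CondH C → (S.SU.Nonempty → S.SparseRegime C) →
        ∀ t, t ≤ S.T + 1 →
          (∀ r : Fin S.m, ∀ i ∈ S.SL, ∀ j, j ≠ S.sig i →
            S.rho i j r t ≤
              S.sigma0 / (S.sigman * Real.sqrt S.d) +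
                S.pun * S.N * S.sigman ^ 2 * Real.sqrt S.d /
                    (100 * Real.log S.T ^ ((2 : ℝ) / 3)) *
                  (S.rhoMaxSU t) ^ 2) ∧
          S.NS t := by
  exact ⟨10 ^ 6, by norm_num, fun S hdyn hE hH hsparse t ht =>
    stmt9_general le_rfl hdyn hE hH hsparse (ht.trans (hH.succ_T_le_sq le_rfl))⟩

end AD

end
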